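/- arXiv:1909.00220 — 5 statements merged into one kernel-verified Lean document; each statement's English description precedes it below -/
import Mathlib

section
/- Fix z ∈ ℂ with Re z ≥ 0. For every integer k ≥ 0 there exists a constant c_k = c(k,z) > 0 such that for all r > 0 and all integers j ≥ 0, the function h^z_{j,r} is C^∞ on ℝ and sup_{ξ∈ℝ} |(h^z_{j,r})^{(k)}(ξ)| ≤ c_k r^{−k} 2^{−(Re z − k)j}. -/
open Real MeasureTheory

/-- ψ(ξ) = e^{−1/ξ²} for ξ > 0 and 0 for ξ ≤ 0. -/
noncomputable def psi (x : ℝ) : ℝ := if 0 < x then Real.exp (-1 / x ^ 2) else 0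

/-- ψ₁(ξ) = ψ(ξ)ψ(1−ξ). -/
noncomputable def psi1 (x : ℝ) : ℝ := psi x * psi (1 - x)

/-- φ(ξ) = ψ₁(ξ + 5/4). -/
noncomputable def phiFn (x : ℝ) : ℝ := psi1 (x + 5 / 4)

/-- φ_j(ξ) = φ(2^j(ξ − 1)). -/
noncomputable def phiJ (j : ℕ) (x : ℝ) : ℝ := phiFn (2 ^ j * (x - 1))

/-- χ_j(ξ) = φ_j(ξ)/Σ_{i≥0} φ_i(ξ) where the denominator is positive, and 0 otherwise. -/
noncomputable def chiJ (j : ℕ) (x : ℝ) : ℝ :=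
  if 0 < ∑' i : ℕ, phiJ i x then phiJ j x / ∑' i : ℕ, phiJ i x else 0

/-- h^z_{j,r}(ξ) = (1 − ξ²/r²)_+^z e^{ξ²/r²} χ_j((ξ/r)²). -/
noncomputable def hzjr (z : ℂ) (j : ℕ) (r : ℝ) (x : ℝ) : ℂ :=
  (if 0 < 1 - x ^ 2 / r ^ 2 then ((1 - x ^ 2 / r ^ 2 : ℝ) : ℂ) ^ z else 0) *
    Complex.exp ((x ^ 2 / r ^ 2 : ℝ) : ℂ) * ((chiJ j ((x / r) ^ 2) : ℝ) : ℂ)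

section helpers
open Filter Topology Polynomial

theorem psi_of_nonpos {x : ℝ} (h : x ≤ 0) : psi x = 0 := by simp [psi, not_lt.2 h]

theorem psi_of_pos {x : ℝ} (h : 0 < x) : 0 < psi x := by simp [psi, h, Real.exp_pos]

theorem psi_nonneg (x : ℝ) : 0 ≤ psi x := by
  rcases le_or_gt x 0 with h | h
  · rw [psi_of_nonpos h]
  · exact (psi_of_pos h).le

theorem psi_tendsto (p : ℝ[X]) :
    Tendsto (fun x ↦ p.eval x⁻¹ * psi x) (𝓝 0) (𝓝 0) := by
  have h0 := (expNegInvGlue.tendsto_polynomial_inv_mul_zero p).norm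
  rw [norm_zero] at h0
  refine squeeze_zero_norm' ?_ h0
  filter_upwards [gt_mem_nhds (zero_lt_one (α := ℝ))] with x hx
  rw [norm_mul, norm_mul]
  refine mul_le_mul_of_nonneg_left ?_ (norm_nonneg _)
  rw [Real.norm_of_nonneg (psi_nonneg _), Real.norm_of_nonneg (expNegInvGlue.nonneg _)]
  rcases le_or_gt x 0 with h | h
  · rw [psi_of_nonpos h, expNegInvGlue.zero_of_nonpos h]
  · simp only [psi, h, if_true, expNegInvGlue, not_le.2 h, if_false]
    apply Real.exp_le_exp.2
    have : 1 ≤ x⁻¹ := (one_le_inv₀ h).2 hx.le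
    rw [neg_div, one_div, ← inv_pow]
    nlinarith

theorem psi_hasDerivAt (p : ℝ[X]) (x : ℝ) :
    HasDerivAt (fun x ↦ p.eval x⁻¹ * psi x)
      ((2 * X ^ 3 * p - X ^ 2 * derivative (R := ℝ) p).eval x⁻¹ * psi x) x := by
  rcases lt_trichotomy x 0 with hx | rfl | hx
  · rw [psi_of_nonpos hx.le, mul_zero]
    refine (hasDerivAt_const _ 0).congr_of_eventuallyEq ?_
    filter_upwards [gt_mem_nhds hx] with y hy
    rw [psi_of_nonpos hy.le, mul_zero]
  · rw [psi_of_nonpos le_rfl, mul_zero, hasDerivAt_iff_tendsto_slope]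
    refine ((psi_tendsto (p * X)).mono_left inf_le_left).congr fun x ↦ ?_
    simp [slope_def_field, div_eq_mul_inv, mul_right_comm, psi_of_nonpos]
  · have := ((p.hasDerivAt x⁻¹).mul (((hasDerivAt_id x⁻¹).pow 2).neg).exp).comp x
      (hasDerivAt_inv hx.ne')
    convert! this.congr_of_eventuallyEq _ using 1
    · simp [psi, hx, neg_div]
      ring
    · filter_upwards [lt_mem_nhds hx] with y hy
      simp [psi, hy, neg_div]

theorem psi_contDiff_aux (m : ℕ) (p : ℝ[X]) :
    ContDiff ℝ m (fun x ↦ p.eval x⁻¹ * psi x) := by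
  have hd (p : ℝ[X]) : Differentiable ℝ (fun x ↦ p.eval x⁻¹ * psi x) :=
    fun x => (psi_hasDerivAt p x).differentiableAt
  induction m generalizing p with
  | zero => exact contDiff_zero.2 (hd p).continuous
  | succ m ihm =>
    rw [show ((m + 1 : ℕ) : WithTop ℕ∞) = m + 1 from rfl]
    refine contDiff_succ_iff_deriv.2 ⟨hd p, by simp, ?_⟩
    convert! ihm (2 * X ^ 3 * p - X ^ 2 * derivative (R := ℝ) p) using 2
    exact (psi_hasDerivAt p _).deriv

theorem psi_contDiff : ContDiff ℝ (⊤ : ℕ∞) psi := by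
  refine contDiff_all_iff_nat.2 (fun m => ?_) _
  simpa using psi_contDiff_aux m 1

theorem phiFn_contDiff : ContDiff ℝ (⊤ : ℕ∞) phiFn := by
  unfold phiFn psi1
  exact (psi_contDiff.comp (by fun_prop)).mul (psi_contDiff.comp (by fun_prop))

theorem phiFn_nonneg (x : ℝ) : 0 ≤ phiFn x := mul_nonneg (psi_nonneg _) (psi_nonneg _)

theorem phiFn_pos {x : ℝ} (h1 : -(5/4) < x) (h2 : x < -(1/4)) : 0 < phiFn x :=
  mul_pos (psi_of_pos (by linarith)) (psi_of_pos (by linarith))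

theorem phiFn_zero_left {x : ℝ} (h1 : x ≤ -(5/4)) : phiFn x = 0 := by
  simp only [phiFn, psi1]; rw [psi_of_nonpos (by linarith), zero_mul]

theorem phiFn_zero_right {x : ℝ} (h1 : -(1/4) ≤ x) : phiFn x = 0 := by
  simp only [phiFn, psi1]; rw [psi_of_nonpos (x := 1 - _) (by linarith), mul_zero]

/-- the rescaled profile -/
noncomputable def Fz (z : ℂ) (D : ℝ → ℝ) (t : ℝ) : ℂ :=
  Complex.exp (((Real.log t : ℝ) : ℂ) * z) * ((phiFn (-t) / D t : ℝ) : ℂ)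

theorem Fz_zero_left (z : ℂ) (D : ℝ → ℝ) {t : ℝ} (h : t ≤ 1/4) : Fz z D t = 0 := by
  simp [Fz, phiFn_zero_right (x := -t) (by linarith)]

theorem Fz_zero_right (z : ℂ) (D : ℝ → ℝ) {t : ℝ} (h : 5/4 ≤ t) : Fz z D t = 0 := by
  simp [Fz, phiFn_zero_left (x := -t) (by linarith)]

theorem Fz_contDiff (z : ℂ) (D : ℝ → ℝ) (hD : ContDiff ℝ (⊤ : ℕ∞) D)
    (hpos : ∀ t, 1/4 ≤ t → t ≤ 5/4 → 0 < D t) : ContDiff ℝ (⊤ : ℕ∞) (Fz z D) := by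
  rw [contDiff_iff_contDiffAt]
  intro t
  by_cases h1 : t < 1/4
  · refine (contDiffAt_const (c := (0:ℂ))).congr_of_eventuallyEq ?_
    filter_upwards [gt_mem_nhds h1] with y hy using Fz_zero_left z D hy.le
  by_cases h2 : 5/4 < t
  · refine (contDiffAt_const (c := (0:ℂ))).congr_of_eventuallyEq ?_
    filter_upwards [lt_mem_nhds h2] with y hy using Fz_zero_right z D hy.le
  push Not at h1 h2
  unfold Fz
  have hl : ContDiffAt ℝ (⊤ : ℕ∞) (fun t : ℝ => ((Real.log t : ℝ) : ℂ)) t :=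
    Complex.ofRealCLM.contDiff.contDiffAt.comp t (Real.contDiffAt_log.2 (by linarith))
  have hq : ContDiffAt ℝ (⊤ : ℕ∞) (fun t : ℝ => ((phiFn (-t) / D t : ℝ) : ℂ)) t :=
    Complex.ofRealCLM.contDiff.contDiffAt.comp t
      (((phiFn_contDiff.comp contDiff_neg).contDiffAt).div hD.contDiffAt (hpos t h1 h2).ne')
  exact ((hl.mul contDiffAt_const).cexp).mul hq

theorem quad_bound (j : ℕ) (s : ℝ) (hs : |s| ≤ 1) (i : ℕ) (hi : 1 ≤ i) :
    ‖iteratedFDeriv ℝ i (fun s : ℝ => (2:ℝ)^j * (1 - s^2)) s‖ ≤ (2 * 2^j) ^ i := by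
  rw [norm_iteratedFDeriv_eq_norm_iteratedDeriv]
  have h1 : (1:ℝ) ≤ 2 ^ j := one_le_pow₀ (by norm_num)
  have d1 : deriv (fun s : ℝ => (2:ℝ)^j * (1 - s^2)) = fun s => (-2 * 2^j) * s := by
    ext s
    have := (((hasDerivAt_id s).pow 2).const_sub 1).const_mul ((2:ℝ)^j)
    refine this.deriv.trans ?_
    simp; ring
  have d2 : deriv (fun s : ℝ => (-2 * 2^j : ℝ) * s) = fun s => (-2 * 2^j) := by
    ext s
    refine ((hasDerivAt_id s).const_mul (-2 * 2^j : ℝ)).deriv.trans ?_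
    simp
  match i, hi with
  | 1, _ =>
    rw [iteratedDeriv_one, d1]
    simp only [norm_mul, Real.norm_eq_abs, abs_neg, abs_two, abs_pow, pow_one]
    exact mul_le_of_le_one_right (by positivity) hs
  | 2, _ =>
    rw [iteratedDeriv_succ', iteratedDeriv_one, d1, d2]
    simp only [norm_mul, Real.norm_eq_abs, abs_neg, abs_two, abs_pow]
    nlinarith
  | n + 3, _ =>
    rw [iteratedDeriv_succ', iteratedDeriv_succ', iteratedDeriv_succ', d1, d2]
    simp only [deriv_const', iteratedDeriv_const]
    simp

/-- the unscaled function -/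
noncomputable def Gf (F : ℝ → ℂ) (j : ℕ) (s : ℝ) : ℂ :=
  Complex.exp ((s ^ 2 : ℝ) : ℂ) * (F ∘ (fun s : ℝ => (2:ℝ)^j * (1 - s^2))) s

theorem sq_exp_contDiff : ContDiff ℝ (⊤ : ℕ∞) (fun s : ℝ => Complex.exp ((s ^ 2 : ℝ) : ℂ)) :=
  (Complex.ofRealCLM.contDiff.comp (contDiff_id.pow 2)).cexp

theorem Gf_contDiff (F : ℝ → ℂ) (hF : ContDiff ℝ (⊤ : ℕ∞) F) (j : ℕ) :
    ContDiff ℝ (⊤ : ℕ∞) (Gf F j) :=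
  sq_exp_contDiff.mul (hF.comp (by fun_prop))

theorem bdd_icc (f : ℝ → ℂ) (hf : ContDiff ℝ (⊤ : ℕ∞) f) (a b : ℝ) (n : ℕ) :
    ∃ C : ℝ, 0 < C ∧ ∀ i, i ≤ n → ∀ x ∈ Set.Icc a b, ‖iteratedFDeriv ℝ i f x‖ ≤ C := by
  have h (i : ℕ) : ∃ C : ℝ, ∀ x ∈ Set.Icc a b, ‖iteratedFDeriv ℝ i f x‖ ≤ C :=
    isCompact_Icc.exists_bound_of_continuousOn
      (hf.continuous_iteratedFDeriv (by exact_mod_cast le_top)).continuousOn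
  choose C hC using h
  refine ⟨∑ i ∈ Finset.range (n+1), |C i| + 1, by positivity, fun i hi x hx => ?_⟩
  have := Finset.single_le_sum (f := fun i => |C i|) (fun i _ => abs_nonneg _)
    (Finset.mem_range.2 (Nat.lt_succ_of_le hi))
  have h2 := hC i x hx
  have h3 := le_abs_self (C i)
  linarith

theorem Gf_bound (F : ℝ → ℂ) (hF : ContDiff ℝ (⊤ : ℕ∞) F)
    (h0 : ∀ t, t ≤ 1/4 → F t = 0) (h1 : ∀ t, 5/4 ≤ t → F t = 0) (k : ℕ) :
    ∃ C : ℝ, 0 < C ∧ ∀ j s, ‖iteratedDeriv k (Gf F j) s‖ ≤ C * (2 ^ j) ^ k := by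
  obtain ⟨A, hA, hA'⟩ := bdd_icc _ sq_exp_contDiff (-1) 1 k
  obtain ⟨B, hB, hB'⟩ := bdd_icc F hF 0 2 k
  refine ⟨∑ i ∈ Finset.range (k+1), (k.choose i : ℝ) * A * ((k-i).factorial * B * 2 ^ (k-i)), ?_, ?_⟩
  · refine Finset.sum_pos (fun i hi => ?_) (by simp)
    have : 0 < k.choose i := Nat.choose_pos (by simp at hi; omega)
    positivity
  have hle (n : ℕ) : (n : WithTop ℕ∞) ≤ ((⊤ : ℕ∞) : WithTop ℕ∞) := by exact_mod_cast le_top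
  intro j s
  have hp : (1:ℝ) ≤ 2 ^ j := one_le_pow₀ (by norm_num)
  by_cases hs : 2^j * (1 - s^2) < 1/4 ∨ 5/4 < 2^j * (1 - s^2)
  · have hz : Gf F j =ᶠ[𝓝 s] fun _ => 0 := by
      have hc : Continuous (fun s : ℝ => (2:ℝ)^j * (1 - s^2)) := by fun_prop
      rcases hs with hs | hs
      · filter_upwards [hc.continuousAt.eventually (gt_mem_nhds hs)] with y hy
        simp [Gf, h0 _ hy.le]
      · filter_upwards [hc.continuousAt.eventually (lt_mem_nhds hs)] with y hy
        simp [Gf, h1 _ hy.le]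
    rw [hz.iteratedDeriv_eq k]
    simp only [iteratedDeriv_const]
    simp
    positivity
  · push Not at hs
    have hs1 : |s| ≤ 1 := by
      rw [← sq_le_one_iff_abs_le_one]
      nlinarith
    rw [← norm_iteratedFDeriv_eq_norm_iteratedDeriv]
    refine (norm_iteratedFDeriv_mul_le sq_exp_contDiff (hF.comp (by fun_prop)) s (n := k)
      (by exact_mod_cast le_top)).trans ?_
    rw [Finset.sum_mul]
    refine Finset.sum_le_sum fun i hi => ?_
    have hi' : i ≤ k := by simp at hi; omega
    have e1 := hA' i hi' s (abs_le.1 hs1)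
    have e2 := norm_iteratedFDeriv_comp_le (n := k - i) (C := B) (D := 2 * 2^j) (N := (⊤ : ℕ∞)) hF
      (f := fun s : ℝ => (2:ℝ)^j * (1 - s^2)) (by fun_prop) (hle _) s
      (fun i' hi' => hB' i' (by omega) _ ⟨by linarith, by linarith⟩)
      (fun i' hi' _ => quad_bound j s hs1 i' hi')
    have e3 : ((2:ℝ) * 2^j) ^ (k-i) ≤ 2 ^ (k-i) * (2^j)^k := by
      rw [mul_pow]
      gcongr
      omega
    calc _ ≤ (k.choose i : ℝ) * A * ((k-i).factorial * B * (2 ^ (k-i) * (2^j)^k)) := by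
          gcongr
          exact e2.trans (by gcongr)
      _ = _ := by ring

noncomputable def Dn : ℕ → ℝ → ℝ
  | 0, t => phiFn (-(1 * t)) + phiFn (-(2 * t)) + phiFn (-(4 * t)) + psi (t - 1)
  | 1, t => phiFn (-(1 / 2 * t)) + phiFn (-(1 * t)) + phiFn (-(2 * t)) + phiFn (-(4 * t))
  | _ + 2, t => phiFn (-(1 / 4 * t)) + phiFn (-(1 / 2 * t)) + phiFn (-(1 * t)) +
      phiFn (-(2 * t)) + phiFn (-(4 * t))

theorem phi_scaled (a : ℝ) : ContDiff ℝ (⊤ : ℕ∞) (fun t => phiFn (-(a * t))) :=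
  phiFn_contDiff.comp (by fun_prop)

theorem Dn_contDiff (j : ℕ) : ContDiff ℝ (⊤ : ℕ∞) (Dn j) := by
  match j with
  | 0 => exact (((phi_scaled _).add (phi_scaled _)).add (phi_scaled _)).add
          (psi_contDiff.comp (by fun_prop))
  | 1 => exact (((phi_scaled _).add (phi_scaled _)).add (phi_scaled _)).add (phi_scaled _)
  | _ + 2 => exact ((((phi_scaled _).add (phi_scaled _)).add (phi_scaled _)).add
          (phi_scaled _)).add (phi_scaled _)

theorem Dn_pos (j : ℕ) (t : ℝ) (h1 : 1/4 ≤ t) (h2 : t ≤ 5/4) : 0 < Dn j t := by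
  have a1 := phiFn_nonneg (-(1 / 4 * t))
  have a2 := phiFn_nonneg (-(1 / 2 * t))
  have a3 := phiFn_nonneg (-(1 * t))
  have a4 := phiFn_nonneg (-(2 * t))
  have a5 := phiFn_nonneg (-(4 * t))
  have a6 := psi_nonneg (t - 1)
  by_cases h : t < 5/8
  · have := phiFn_pos (x := -(2 * t)) (by linarith) (by linarith)
    match j with
    | 0 => simp only [Dn]; linarith
    | 1 => simp only [Dn]; linarith
    | _ + 2 => simp only [Dn]; linarith
  · have := phiFn_pos (x := -(1 / 2 * t)) (by linarith) (by linarith)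
    match j with
    | 0 =>
      simp only [Dn]
      by_cases h' : t < 5/4
      · have := phiFn_pos (x := -(1 * t)) (by linarith) (by linarith)
        linarith
      · have := psi_of_pos (x := t - 1) (by linarith)
        linarith
    | 1 => simp only [Dn]; linarith
    | _ + 2 => simp only [Dn]; linarith

theorem phiJ_eq (i : ℕ) (u : ℝ) : phiJ i (1 - u) = phiFn (-(2 ^ i * u)) := by
  unfold phiJ; congr 1; ring

theorem tsum_eq_Dn (j : ℕ) (u : ℝ) (hu : u ≤ 1) (h1 : 1/4 < 2 ^ j * u) (h2 : 2 ^ j * u < 5/4) :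
    ∑' i, phiJ i (1 - u) = Dn j (2 ^ j * u) := by
  have hu0 : 0 < u := by
    by_contra h
    have : 2 ^ j * u ≤ 0 := mul_nonpos_of_nonneg_of_nonpos (by positivity) (not_lt.1 h)
    linarith
  have big (i : ℕ) (hi : j + 3 ≤ i) : phiJ i (1 - u) = 0 := by
    rw [phiJ_eq]
    apply phiFn_zero_left
    have : (2:ℝ) ^ (j + 3) * u ≤ 2 ^ i * u := by gcongr; norm_num
    rw [pow_add] at this
    linarith
  have small (i : ℕ) (hi : i + 3 ≤ j) : phiJ i (1 - u) = 0 := by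
    rw [phiJ_eq]
    apply phiFn_zero_right
    have : (2:ℝ) ^ (i + 3) * u ≤ 2 ^ j * u := by gcongr; norm_num
    rw [pow_add] at this
    linarith
  match j with
  | 0 =>
    rw [tsum_eq_sum (s := {0, 1, 2}) (fun i hi => big i (by simp at hi; omega))]
    simp only [phiJ_eq, Dn]
    rw [psi_of_nonpos (by simpa using hu)]
    simp
    norm_num
    ring
  | 1 =>
    rw [tsum_eq_sum (s := {0, 1, 2, 3}) (fun i hi => big i (by simp at hi; omega))]
    simp only [phiJ_eq, Dn]
    simp
    norm_num
    ring_nf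
  | n + 2 =>
    rw [tsum_eq_sum (s := {n, n+1, n+2, n+3, n+4}) (fun i hi => by
      simp at hi
      by_cases h : i < n
      · exact small i (by omega)
      · exact big i (by omega))]
    simp only [phiJ_eq, Dn]
    rw [Finset.sum_insert (by simp), Finset.sum_insert (by simp), Finset.sum_insert (by simp),
      Finset.sum_insert (by simp), Finset.sum_singleton]
    simp only [pow_add]
    ring_nf

theorem hzjr_eq (z : ℂ) (j : ℕ) (r : ℝ) (x : ℝ) :
    hzjr z j r x = Complex.exp (((-(j * Real.log 2) : ℝ) : ℂ) * z) *
      Gf (Fz z (Dn j)) j (r⁻¹ * x) := by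
  have hxr : x ^ 2 / r ^ 2 = (r⁻¹ * x) ^ 2 := by rw [mul_pow, inv_pow]; ring
  have hxr' : (x / r) ^ 2 = (r⁻¹ * x) ^ 2 := by rw [div_eq_inv_mul]
  unfold hzjr
  rw [hxr, hxr']
  generalize r⁻¹ * x = s
  simp only [Gf, Function.comp]
  obtain ⟨u, hu⟩ : ∃ u, u = 1 - s ^ 2 := ⟨_, rfl⟩
  have hs : s ^ 2 = 1 - u := by rw [hu]; ring
  have hu1 : u ≤ 1 := by rw [hu]; nlinarith [sq_nonneg s]
  rw [hs, sub_sub_cancel]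
  by_cases h : 1/4 < 2 ^ j * u ∧ 2 ^ j * u < 5/4
  · obtain ⟨h1, h2⟩ := h
    have hu0 : 0 < u := by
      by_contra h
      have : 2 ^ j * u ≤ 0 := mul_nonpos_of_nonneg_of_nonpos (by positivity) (not_lt.1 h)
      linarith
    have hD := Dn_pos j _ h1.le h2.le
    rw [if_pos hu0, chiJ, tsum_eq_Dn j u hu1 h1 h2, if_pos hD, phiJ_eq, Fz,
      Real.log_mul (by positivity) hu0.ne', Real.log_pow,
      Complex.cpow_def_of_ne_zero (by exact_mod_cast hu0.ne'), ← Complex.ofReal_log hu0.le]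
    have : Complex.exp ((Real.log u : ℂ) * z) = Complex.exp (((-(j * Real.log 2) : ℝ) : ℂ) * z) *
        Complex.exp (((j * Real.log 2 + Real.log u : ℝ) : ℂ) * z) := by
      rw [← Complex.exp_add]
      congr 1
      push_cast
      ring
    rw [this]
    ring
  · have hF : Fz z (Dn j) (2 ^ j * u) = 0 := by
      by_cases h1 : 1/4 < 2 ^ j * u
      · exact Fz_zero_right _ _ (not_lt.1 fun h2 => h ⟨h1, h2⟩)
      · exact Fz_zero_left _ _ (not_lt.1 h1)
    have hc : chiJ j (1 - u) = 0 := by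
      have : phiJ j (1 - u) = 0 := by
        rw [phiJ_eq]
        by_cases h1 : 1/4 < 2 ^ j * u
        · have := not_lt.1 fun h2 => h ⟨h1, h2⟩
          exact phiFn_zero_left (by linarith)
        · exact phiFn_zero_right (by linarith)
      simp [chiJ, this]
    rw [hF, hc]
    simp

theorem Gf_Dn_bound (z : ℂ) (k : ℕ) :
    ∃ C : ℝ, 0 < C ∧ ∀ j s, ‖iteratedDeriv k (Gf (Fz z (Dn j)) j) s‖ ≤ C * (2 ^ j) ^ k := by
  have H (m : ℕ) := Gf_bound (Fz z (Dn m)) (Fz_contDiff z _ (Dn_contDiff m) (Dn_pos m))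
    (fun t => Fz_zero_left z _) (fun t => Fz_zero_right z _) k
  obtain ⟨C0, p0, H0⟩ := H 0
  obtain ⟨C1, p1, H1⟩ := H 1
  obtain ⟨C2, p2, H2⟩ := H 2
  refine ⟨C0 + C1 + C2, by positivity, fun j s => ?_⟩
  match j with
  | 0 => exact (H0 0 s).trans (by gcongr; linarith)
  | 1 => exact (H1 1 s).trans (by gcongr; linarith)
  | n + 2 =>
    have : Dn (n + 2) = Dn 2 := by ext t; simp [Dn]
    rw [this]
    exact (H2 (n+2) s).trans (by gcongr; linarith)

end helpers

/-- Fix z with Re z ≥ 0. For every k there is c_k > 0 such that for all r > 0 and j,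
h^z_{j,r} is C^∞ and sup_ξ |(h^z_{j,r})^{(k)}(ξ)| ≤ c_k r^{−k} 2^{−(Re z − k)j}. -/
theorem hzjr_iteratedDeriv_bound (z : ℂ) (hz : 0 ≤ z.re) :
    ∀ k : ℕ, ∃ c : ℝ, 0 < c ∧ ∀ r : ℝ, 0 < r → ∀ j : ℕ,
      ContDiff ℝ (⊤ : ℕ∞) (hzjr z j r) ∧
      ∀ x : ℝ, ‖iteratedDeriv k (hzjr z j r) x‖ ≤
        c * r ^ (-(k : ℤ)) * (2 : ℝ) ^ (-((z.re - k) * j)) := by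
  intro k
  obtain ⟨C, hC, H⟩ := Gf_Dn_bound z k
  refine ⟨C, hC, fun r hr j => ?_⟩
  have hG := Gf_contDiff _ (Fz_contDiff z _ (Dn_contDiff j) (Dn_pos j)) j
  have heq : hzjr z j r = fun x => Complex.exp (((-(j * Real.log 2) : ℝ) : ℂ) * z) *
      Gf (Fz z (Dn j)) j (r⁻¹ * x) := funext (hzjr_eq z j r)
  have hk : (k : WithTop ℕ∞) ≤ ((⊤ : ℕ∞) : WithTop ℕ∞) := by exact_mod_cast le_top
  rw [heq]
  refine ⟨contDiff_const.mul (hG.comp (by fun_prop)), fun x => ?_⟩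
  rw [iteratedDeriv_const_mul_field]
  have e := congrFun (iteratedDeriv_comp_const_smul (hG.of_le hk) r⁻¹) x
  rw [e, norm_mul, norm_smul, Complex.norm_exp, Complex.re_ofReal_mul, norm_pow, norm_inv,
    Real.norm_of_nonneg hr.le]
  have hr' : r ^ (-(k : ℤ)) = r⁻¹ ^ k := by simp
  have h2 : (2 : ℝ) ^ (-((z.re - k) * j)) = Real.exp (-(j * Real.log 2) * z.re) * (2 ^ j) ^ k := by
    rw [Real.rpow_def_of_pos two_pos, show ((2:ℝ) ^ j) ^ k = Real.exp (Real.log 2 * (j * k)) by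
      rw [← Real.rpow_def_of_pos two_pos, ← pow_mul, ← Nat.cast_mul, Real.rpow_natCast],
      ← Real.exp_add]
    congr 1
    ring
  rw [hr', h2]
  calc _ ≤ Real.exp (-(j * Real.log 2) * z.re) * (r⁻¹ ^ k * (C * (2 ^ j) ^ k)) := by
        gcongr
        exact H j _
    _ = _ := by ring
end

section
/- Let z ∈ ℂ with Re z > 0. Then for every γ ∈ ℝ the integral ℳ(γ) := (2π)^{−1} ∫_0^∞ M(ξ) ξ^{−iγ−1} dξ converges absolutely, and there exists a constant c = c(z) > 0 such that |ℳ(γ)| ≤ c (1 + |γ|)^{−(Re z + 1)} for all γ ∈ ℝ. -/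
open Real MeasureTheory

/-- M(ξ) = (1−ξ)_+^z − e^{−ξ}, where (1−ξ)_+^z = (1−ξ)^z for ξ < 1 and 0 for ξ ≥ 1. -/
noncomputable def rieszM (z : ℂ) (x : ℝ) : ℂ :=
  (if x < 1 then ((1 - x : ℝ) : ℂ) ^ z else 0) - Complex.exp (-(x : ℂ))


lemma factor_bound (w : ℂ) (γ : ℝ) (j : ℕ) (hγ : 1 ≤ |γ|) :
    ‖(-(Complex.I * γ) + w + j) / (-(Complex.I * γ) + j)‖ ≤
      Real.exp ((2 * w.re * j + 2 * ‖w‖ * |γ| + ‖w‖ ^ 2) / ((j:ℝ) ^ 2 + γ ^ 2) / 2) := by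
  have hD : 0 < (j:ℝ) ^ 2 + γ ^ 2 := by
    have : 0 < γ ^ 2 := by rw [← sq_abs]; positivity
    positivity
  have h1 : ‖(-(Complex.I * γ) + w + j) / (-(Complex.I * γ) + j)‖ ^ 2 =
      1 + (2 * w.re * j - 2 * w.im * γ + ‖w‖ ^ 2) / ((j:ℝ) ^ 2 + γ ^ 2) := by
    rw [norm_div, div_pow, Complex.sq_norm, Complex.sq_norm, Complex.sq_norm]
    simp only [Complex.normSq_apply]
    simp
    have : (j:ℝ) * j + γ * γ ≠ 0 := by nlinarith
    field_simp
    ring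
  have h2 : ‖(-(Complex.I * γ) + w + j) / (-(Complex.I * γ) + j)‖ ^ 2 ≤
      Real.exp ((2 * w.re * j + 2 * ‖w‖ * |γ| + ‖w‖ ^ 2) / ((j:ℝ) ^ 2 + γ ^ 2)) := by
    rw [h1]
    have h3 : - 2 * w.im * γ ≤ 2 * ‖w‖ * |γ| := by
      have := Complex.abs_im_le_norm w
      have h4 : -(w.im * γ) ≤ |w.im| * |γ| := by rw [← abs_mul]; exact neg_le_abs _
      nlinarith [abs_nonneg γ]
    calc _ ≤ 1 + (2 * w.re * j + 2 * ‖w‖ * |γ| + ‖w‖ ^ 2) / ((j:ℝ) ^ 2 + γ ^ 2) := by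
          gcongr; linarith
      _ ≤ _ := by rw [add_comm]; exact Real.add_one_le_exp _
  have h5 : Real.exp ((2 * w.re * j + 2 * ‖w‖ * |γ| + ‖w‖ ^ 2) / ((j:ℝ) ^ 2 + γ ^ 2)) =
     Real.exp ((2 * w.re * j + 2 * ‖w‖ * |γ| + ‖w‖ ^ 2) / ((j:ℝ) ^ 2 + γ ^ 2) / 2) ^ 2 := by
    rw [← Real.exp_nat_mul]; congr 1; push_cast; ring
  rw [h5] at h2
  exact (sq_le_sq₀ (norm_nonneg _) (Real.exp_pos _).le).1 h2

lemma inv_D_bound (y : ℝ) (hy : 1 ≤ y) (j : ℕ) :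
    y / ((j:ℝ) ^ 2 + y ^ 2) ≤ 4 * y * (1 / (j + y) - 1 / (j + 1 + y)) := by
  have hj : (0:ℝ) ≤ j := Nat.cast_nonneg j
  have : 4 * y * (1 / ((j:ℝ) + y) - 1 / (j + 1 + y)) = y * 4 / ((j + y) * (j + 1 + y)) := by
    field_simp; ring
  rw [this, div_le_div_iff₀ (by positivity) (by positivity)]
  have : (j + y) * (j + 1 + y) ≤ 4 * ((j:ℝ) ^ 2 + y ^ 2) := by
    nlinarith [sq_nonneg ((j:ℝ) - y)]
  nlinarith

lemma prod_bound (w : ℂ) (hw : 0 < w.re) (γ : ℝ) (hγ : 1 ≤ |γ|) (n : ℕ) :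
    ∏ j ∈ Finset.range (n + 1), ‖(-(Complex.I * γ) + w + j) / (-(Complex.I * γ) + j)‖ ≤
      Real.exp (w.re / 2 * (Real.log ((n:ℝ) ^ 2 + γ ^ 2) - Real.log (γ ^ 2)) +
        (w.re + 2 * ‖w‖ + ‖w‖ ^ 2) / 2 * (4 * |γ| * (1 / |γ| - 1 / (n + 1 + |γ|)))) := by
  have hy0 : 0 < |γ| := by linarith
  have hg : 0 < γ ^ 2 := by rw [← sq_abs]; positivity
  have hww : 0 ≤ ‖w‖ := norm_nonneg w
  induction n with
  | zero =>
    simp only [zero_add, Finset.prod_range_one]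
    refine (factor_bound w γ 0 hγ).trans (Real.exp_le_exp.2 ?_)
    have h := inv_D_bound |γ| hγ 0
    simp only [Nat.cast_zero, sq_abs] at h ⊢
    simp only [zero_add, sub_self, mul_zero, ne_eq, OfNat.ofNat_ne_zero, not_false_eq_true, zero_pow] at h ⊢
    have h2 : (2 * ‖w‖ * |γ| + ‖w‖ ^ 2) / γ ^ 2 / 2 ≤ (w.re + 2 * ‖w‖ + ‖w‖ ^ 2) / 2 * (|γ| / γ ^ 2) := by
      have : (w.re + 2 * ‖w‖ + ‖w‖ ^ 2) / 2 * (|γ| / γ ^ 2) =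
        ((w.re + 2 * ‖w‖ + ‖w‖ ^ 2) * |γ|) / γ ^ 2 / 2 := by ring
      rw [this]
      gcongr
      nlinarith [sq_nonneg ‖w‖]
    refine h2.trans ?_
    gcongr
  | succ n ih =>
    rw [Finset.prod_range_succ]
    refine (mul_le_mul ih (factor_bound w γ (n+1) hγ) (norm_nonneg _) (Real.exp_pos _).le).trans ?_
    rw [← Real.exp_add]
    refine Real.exp_le_exp.2 ?_
    have h := inv_D_bound |γ| hγ (n+1)
    rw [sq_abs] at h
    push_cast at h ⊢
    have hD : 0 < ((n:ℝ)+1) ^ 2 + γ ^ 2 := by positivity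
    have hD' : 0 < (n:ℝ) ^ 2 + γ ^ 2 := by positivity
    have hlog : (2 * ((n:ℝ) + 1) - 1) / (((n:ℝ)+1) ^ 2 + γ ^ 2) ≤
        Real.log (((n:ℝ)+1) ^ 2 + γ ^ 2) - Real.log ((n:ℝ) ^ 2 + γ ^ 2) := by
      have := Real.log_le_sub_one_of_pos (div_pos hD' hD)
      rw [Real.log_div hD'.ne' hD.ne'] at this
      have e : (2 * ((n:ℝ) + 1) - 1) / (((n:ℝ)+1) ^ 2 + γ ^ 2) =
        1 - ((n:ℝ) ^ 2 + γ ^ 2) / (((n:ℝ)+1) ^ 2 + γ ^ 2) := by field_simp; ring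
      rw [e]; linarith
    have key : (2 * w.re * ((n:ℝ) + 1) + 2 * ‖w‖ * |γ| + ‖w‖ ^ 2) / (((n:ℝ)+1) ^ 2 + γ ^ 2) / 2 ≤
       w.re / 2 * ((2 * ((n:ℝ) + 1) - 1) / (((n:ℝ)+1) ^ 2 + γ ^ 2)) +
       (w.re + 2 * ‖w‖ + ‖w‖ ^ 2) / 2 * (|γ| / (((n:ℝ)+1) ^ 2 + γ ^ 2)) := by
      have : w.re / 2 * ((2 * ((n:ℝ) + 1) - 1) / (((n:ℝ)+1) ^ 2 + γ ^ 2)) +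
       (w.re + 2 * ‖w‖ + ‖w‖ ^ 2) / 2 * (|γ| / (((n:ℝ)+1) ^ 2 + γ ^ 2)) =
       (w.re * (2 * ((n:ℝ) + 1) - 1) + (w.re + 2 * ‖w‖ + ‖w‖ ^ 2) * |γ|) / (((n:ℝ)+1) ^ 2 + γ ^ 2) / 2 := by
        ring
      rw [this]
      refine div_le_div_of_nonneg_right (div_le_div_of_nonneg_right ?_ hD.le) (by norm_num)
      nlinarith [sq_nonneg ‖w‖]
    have k1 := mul_le_mul_of_nonneg_left hlog (show 0 ≤ w.re / 2 by positivity)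
    have k2 := mul_le_mul_of_nonneg_left h (show 0 ≤ (w.re + 2 * ‖w‖ + ‖w‖ ^ 2) / 2 by positivity)
    linear_combination key + k1 + k2

lemma seq_ratio (w : ℂ) (γ : ℝ) (n : ℕ) (hn : n ≠ 0) :
    ‖Complex.GammaSeq (-(Complex.I * γ)) n / Complex.GammaSeq (-(Complex.I * γ) + w) n‖ =
      Real.exp (-(w.re * Real.log n)) *
      ∏ j ∈ Finset.range (n + 1), ‖(-(Complex.I * γ) + w + j) / (-(Complex.I * γ) + j)‖ := by
  have hn' : (0:ℝ) < n := by positivity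
  have hc : ∀ s : ℂ, ‖(n:ℂ) ^ s‖ = Real.exp (s.re * Real.log n) := by
    intro s
    rw [← Complex.ofReal_natCast, Complex.norm_cpow_eq_rpow_re_of_pos hn', Real.rpow_def_of_pos hn', mul_comm]
  unfold Complex.GammaSeq
  simp only [norm_div, norm_mul, hc, norm_prod, Finset.prod_div_distrib]
  have hf : ‖((n.factorial : ℕ) : ℂ)‖ ≠ 0 := by simp [Nat.factorial_ne_zero]
  have e0 : (-(Complex.I * (γ:ℂ))).re = 0 := by simp
  have e1 : (-(Complex.I * (γ:ℂ)) + w).re = w.re := by simp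
  rw [e0, e1, Real.exp_neg]
  simp only [zero_mul, Real.exp_zero]
  have := (Real.exp_pos (w.re * Real.log n)).ne'
  generalize (∏ b ∈ Finset.range (n + 1), ‖-(Complex.I * ↑γ) + w + (b:ℂ)‖) = A
  generalize (∏ b ∈ Finset.range (n + 1), ‖-(Complex.I * ↑γ) + (b:ℂ)‖) = B
  simp only [div_eq_mul_inv, mul_inv, inv_inv]
  field_simp

lemma gamma_ratio_bound (w : ℂ) (hw : 0 < w.re) (γ : ℝ) (hγ : 1 ≤ |γ|) :
    ‖Complex.Gamma (-(Complex.I * γ)) / Complex.Gamma (-(Complex.I * γ) + w)‖ ≤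
      Real.exp (w.re / 2 * Real.log 2 + 2 * (w.re + 2 * ‖w‖ + ‖w‖ ^ 2)) * |γ| ^ (-w.re) := by
  have hy0 : 0 < |γ| := by linarith
  have hg : 0 < γ ^ 2 := by rw [← sq_abs]; positivity
  have hww : 0 ≤ ‖w‖ := norm_nonneg w
  have hne : Complex.Gamma (-(Complex.I * γ) + w) ≠ 0 :=
    Complex.Gamma_ne_zero_of_re_pos (by simpa using hw)
  have ht := ((Complex.GammaSeq_tendsto_Gamma (-(Complex.I * γ))).div
    (Complex.GammaSeq_tendsto_Gamma (-(Complex.I * γ) + w)) hne).norm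
  refine le_of_tendsto ht ?_
  filter_upwards [Filter.eventually_ge_atTop (Nat.ceil |γ|), Filter.eventually_ge_atTop 1] with n hn hn1
  have hn2 : |γ| ≤ n := Nat.ceil_le.1 hn
  have hnp : (0:ℝ) < n := by linarith
  simp only [Pi.div_apply]
  rw [seq_ratio w γ n (by omega)]
  refine (mul_le_mul_of_nonneg_left (prod_bound w hw γ hγ n) (Real.exp_pos _).le).trans ?_
  rw [Real.rpow_def_of_pos hy0, ← Real.exp_add, ← Real.exp_add]
  refine Real.exp_le_exp.2 ?_
  have l1 : Real.log ((n:ℝ) ^ 2 + γ ^ 2) ≤ Real.log 2 + 2 * Real.log n := by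
    rw [show Real.log 2 + 2 * Real.log n = Real.log (2 * (n:ℝ) ^ 2) by
      rw [Real.log_mul (by norm_num) (by positivity), Real.log_pow]; push_cast; ring]
    refine Real.log_le_log (by positivity) ?_
    rw [← sq_abs γ]; nlinarith
  have l2 : Real.log (γ ^ 2) = 2 * Real.log |γ| := by
    rw [← sq_abs, Real.log_pow]; push_cast; ring
  have l3 : 4 * |γ| * (1 / |γ| - 1 / (n + 1 + |γ|)) ≤ 4 := by
    have : 0 ≤ 4 * |γ| * (1 / (n + 1 + |γ|)) := by positivity
    have e : 4 * |γ| * (1 / |γ|) = 4 := by field_simp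
    linarith
  have k1 := mul_le_mul_of_nonneg_left l1 (show 0 ≤ w.re / 2 by positivity)
  have k3 := mul_le_mul_of_nonneg_left l3 (show 0 ≤ (w.re + 2 * ‖w‖ + ‖w‖ ^ 2) / 2 by positivity)
  rw [l2]
  linear_combination k1 + k3

lemma gamma_norm_le (s : ℂ) (hs : 0 < s.re) : ‖Complex.Gamma s‖ ≤ Real.Gamma s.re := by
  rw [Complex.Gamma_eq_integral hs, Real.Gamma_eq_integral hs, Complex.GammaIntegral]
  refine (norm_integral_le_integral_norm _).trans (le_of_eq ?_)
  refine setIntegral_congr_fun measurableSet_Ioi fun x hx => ?_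
  simp only [norm_mul]
  rw [Complex.norm_cpow_eq_rpow_re_of_pos hx, Complex.norm_real, Real.norm_of_nonneg (Real.exp_pos _).le]
  simp

lemma gamma_decay (γ : ℝ) (hγ : 1 ≤ |γ|) (N : ℕ) :
    ‖Complex.Gamma (-(Complex.I * γ))‖ * |γ| ^ N ≤ ‖Complex.Gamma (-(Complex.I * γ) + N)‖ := by
  have hg : γ ≠ 0 := by rintro rfl; norm_num at hγ
  induction N with
  | zero => simp
  | succ N ih =>
    have hk : |γ| ≤ ‖-(Complex.I * γ) + N‖ := by
      have := Complex.abs_im_le_norm (-(Complex.I * γ) + N)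
      simpa using this
    have hne : -(Complex.I * γ) + (N:ℂ) ≠ 0 := by
      rw [← norm_pos_iff]; linarith
    push_cast
    rw [← add_assoc, Complex.Gamma_add_one _ hne, norm_mul, pow_succ, ← mul_assoc, mul_comm]
    exact mul_le_mul hk ih (by positivity) (norm_nonneg _)

lemma rieszM_eq (z : ℂ) (hz : 0 < z.re) (x : ℝ) :
    rieszM z x = ((max (1 - x) 0 : ℝ) : ℂ) ^ z - Complex.exp (-(x : ℂ)) := by
  unfold rieszM
  have hz0 : z ≠ 0 := by rintro rfl; simp at hz
  split_ifs with h
  · rw [max_eq_left (by linarith)]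
  · rw [max_eq_right (by linarith)]; simp [Complex.zero_cpow hz0]

lemma rieszM_cont (z : ℂ) (hz : 0 < z.re) : Continuous (rieszM z) := by
  rw [funext (rieszM_eq z hz)]
  have := (Complex.continuous_ofReal_cpow_const hz).comp
    (show Continuous fun x : ℝ => max (1 - x) 0 by fun_prop)
  exact this.sub (by fun_prop)

lemma rieszM_top (z : ℂ) : rieszM z =O[Filter.atTop] fun x : ℝ => x ^ (-(2:ℝ)) := by
  have h := (isLittleO_exp_neg_mul_rpow_atTop one_pos (-2)).isBigO
  refine Asymptotics.IsBigO.trans (Asymptotics.IsBigO.of_bound 1 ?_) h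
  filter_upwards [Filter.eventually_ge_atTop 1] with x hx
  simp [rieszM, not_lt.2 hx, Complex.norm_exp]

lemma rieszM_zero (z : ℂ) : rieszM z =O[nhdsWithin 0 (Set.Ioi 0)] fun x : ℝ => x ^ (-(-1:ℝ)) := by
  have hd : DifferentiableAt ℝ (fun x : ℝ => ((1 - x : ℝ) : ℂ) ^ z - Complex.exp (-(x : ℂ))) 0 := by
    have h1 : HasDerivAt (fun x : ℂ => (1 - x) ^ z - Complex.exp (-x)) 
        ((z * (1 - ((0:ℝ):ℂ)) ^ (z - 1) * (-1)) - Complex.exp (-((0:ℝ):ℂ)) * (-1)) ((0:ℝ):ℂ) := by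
      refine HasDerivAt.sub ?_ ?_
      · exact ((hasDerivAt_id _).const_sub 1).cpow_const (by simp)
      · exact (hasDerivAt_neg _).cexp
    have := h1.comp_ofReal.differentiableAt
    simpa using this
  have h := hd.hasDerivAt.isBigO_sub
  have h' := h.mono (nhdsWithin_le_nhds (s := Set.Ioi (0:ℝ)))
  refine (h'.congr' ?_ ?_)
  · have : Set.Iio (1:ℝ) ∈ nhdsWithin 0 (Set.Ioi (0:ℝ)) := nhdsWithin_le_nhds (Iio_mem_nhds one_pos)
    filter_upwards [this] with x hx
    simp only [Set.mem_Iio] at hx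
    simp [rieszM, hx]
  · filter_upwards with x
    simp

lemma riesz_conv (z : ℂ) (hz : 0 < z.re) (s : ℂ) (h1 : -1 < s.re) (h2 : s.re < 2) :
    MellinConvergent (rieszM z) s :=
  mellinConvergent_of_isBigO_rpow ((rieszM_cont z hz).locallyIntegrable.locallyIntegrableOn _)
    (rieszM_top z) h2 (rieszM_zero z) h1

lemma riesz_diff (z : ℂ) (hz : 0 < z.re) (s : ℂ) (h1 : -1 < s.re) (h2 : s.re < 2) :
    DifferentiableAt ℂ (mellin (rieszM z)) s :=
  mellin_differentiableAt_of_isBigO_rpow ((rieszM_cont z hz).locallyIntegrable.locallyIntegrableOn _)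
    (rieszM_top z) h2 (rieszM_zero z) h1

lemma riesz_mellin_pos (z : ℂ) (hz : 0 < z.re) (s : ℂ) (hs : 0 < s.re) :
    mellin (rieszM z) s =
      Complex.Gamma s * Complex.Gamma (z + 1) / Complex.Gamma (s + (z + 1)) - Complex.Gamma s := by
  have hz1 : 0 < (z + 1).re := by simp; linarith
  rw [← Complex.betaIntegral_eq_Gamma_mul_div s (z+1) hs hz1]
  have hb := Complex.betaIntegral_convergent hs hz1
  rw [intervalIntegrable_iff_integrableOn_Ioo_of_le zero_le_one] at hb
  have hg := Complex.GammaIntegral_convergent hs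
  have hb' : IntegrableOn ((Set.Ioo (0:ℝ) 1).indicator
      (fun x : ℝ => (x:ℂ) ^ (s - 1) * (1 - (x:ℂ)) ^ (z + 1 - 1))) (Set.Ioi 0) :=
    ((integrable_indicator_iff measurableSet_Ioo).2 hb).integrableOn
  have hB : Complex.betaIntegral s (z + 1) = ∫ x in Set.Ioi (0:ℝ), (Set.Ioo (0:ℝ) 1).indicator
      (fun x : ℝ => (x:ℂ) ^ (s - 1) * (1 - (x:ℂ)) ^ (z + 1 - 1)) x := by
    rw [setIntegral_indicator measurableSet_Ioo, Complex.betaIntegral,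
      intervalIntegral.integral_of_le zero_le_one, integral_Ioc_eq_integral_Ioo,
      Set.inter_eq_right.2 Set.Ioo_subset_Ioi_self]
  conv_rhs => rw [Complex.Gamma_eq_integral hs]
  rw [Complex.GammaIntegral, hB, ← integral_sub hb' hg, mellin]
  refine setIntegral_congr_fun measurableSet_Ioi fun x hx => ?_
  simp only [Set.mem_Ioi] at hx
  simp only [rieszM, smul_eq_mul, Set.indicator, Set.mem_Ioo, hx, true_and, add_sub_cancel_right]
  split_ifs <;> push_cast <;> ring

lemma riesz_mellin_im (z : ℂ) (hz : 0 < z.re) (γ : ℝ) (hγ : γ ≠ 0) :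
    mellin (rieszM z) (-(Complex.I * γ)) =
      Complex.Gamma (-(Complex.I * γ)) * Complex.Gamma (z + 1) /
        Complex.Gamma (-(Complex.I * γ) + (z + 1)) - Complex.Gamma (-(Complex.I * γ)) := by
  set s : ℂ := -(Complex.I * γ) with hs
  have hre : s.re = 0 := by simp [hs]
  have hG : ContinuousAt Complex.Gamma s := by
    refine (Complex.differentiableAt_Gamma s fun m h => hγ ?_).continuousAt
    have := congrArg Complex.im h
    simpa [hs] using this
  have hrew : 0 < (s + (z + 1)).re := by simp [hre]; linarith
  have hG2 : ContinuousAt (fun s => Complex.Gamma (s + (z + 1))) s := by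
    have h0 : ContinuousAt Complex.Gamma (s + (z + 1)) := by
      refine (Complex.differentiableAt_Gamma _ fun m h => ?_).continuousAt
      rw [h] at hrew
      simp at hrew
      linarith [(Nat.cast_nonneg m : (0:ℝ) ≤ m)]
    exact ContinuousAt.comp (f := fun s => s + (z + 1)) h0 (by fun_prop)
  have hR : ContinuousAt (fun s => Complex.Gamma s * Complex.Gamma (z + 1) /
        Complex.Gamma (s + (z + 1)) - Complex.Gamma s) s :=
    ((hG.mul continuousAt_const).div hG2 (Complex.Gamma_ne_zero_of_re_pos hrew)).sub hG
  have hL : ContinuousAt (mellin (rieszM z)) s :=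
    (riesz_diff z hz s (by rw [hre]; norm_num) (by rw [hre]; norm_num)).continuousAt
  have hc : Filter.Tendsto (fun ε : ℝ => s + (ε:ℂ)) (nhdsWithin 0 (Set.Ioi 0)) (nhds s) := by
    have : Continuous fun ε : ℝ => s + (ε:ℂ) := by fun_prop
    have h := this.tendsto 0
    simp only [Complex.ofReal_zero, add_zero] at h
    exact h.mono_left nhdsWithin_le_nhds
  refine tendsto_nhds_unique (hL.tendsto.comp hc) ((hR.tendsto.comp hc).congr' ?_)
  filter_upwards [self_mem_nhdsWithin] with ε hε
  simp only [Set.mem_Ioi] at hε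
  exact (riesz_mellin_pos z hz (s + ε) (by simpa [hre] using hε)).symm

lemma integrand_eq (z : ℂ) (γ : ℝ) (x : ℝ) (hx : 0 < x) :
    rieszM z x * Complex.exp ((-(Complex.I * γ) - 1) * Real.log x) =
      (x:ℂ) ^ (-(Complex.I * γ) - 1) • rieszM z x := by
  rw [Complex.cpow_def_of_ne_zero (by exact_mod_cast hx.ne'), Complex.ofReal_log hx.le, smul_eq_mul,
    mul_comm, mul_comm (Complex.log _)]

lemma mellin_small (z : ℂ) (γ : ℝ) :
    ‖mellin (rieszM z) (-(Complex.I * γ))‖ ≤ ∫ x in Set.Ioi (0:ℝ), x ^ (-1:ℝ) * ‖rieszM z x‖ := by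
  rw [mellin]
  refine (MeasureTheory.norm_integral_le_integral_norm _).trans (le_of_eq ?_)
  refine setIntegral_congr_fun measurableSet_Ioi fun x hx => ?_
  simp only [norm_smul]
  rw [Complex.norm_cpow_eq_rpow_re_of_pos hx]
  simp

theorem rieszM_mellin_bound (z : ℂ) (hz : 0 < z.re) :
    (∀ γ : ℝ, IntegrableOn
      (fun x : ℝ => rieszM z x * Complex.exp ((-(Complex.I * γ) - 1) * Real.log x))
      (Set.Ioi 0)) ∧
    ∃ c : ℝ, 0 < c ∧ ∀ γ : ℝ,
      ‖((2 * π : ℝ) : ℂ)⁻¹ * ∫ x in Set.Ioi (0 : ℝ),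
          rieszM z x * Complex.exp ((-(Complex.I * γ) - 1) * Real.log x)‖ ≤
        c * (1 + |γ|) ^ (-(z.re + 1)) := by
  constructor
  · intro γ
    refine IntegrableOn.congr_fun (riesz_conv z hz (-(Complex.I * γ)) (by simp) (by simp)) ?_
      measurableSet_Ioi
    intro x hx
    exact (integrand_eq z γ x hx).symm
  · obtain ⟨N, hN⟩ := exists_nat_ge (z.re + 1)
    set C0 := ∫ x in Set.Ioi (0:ℝ), x ^ (-1:ℝ) * ‖rieszM z x‖ with hC0
    have hC0n : 0 ≤ C0 := setIntegral_nonneg measurableSet_Ioi fun x hx =>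
      mul_nonneg (Real.rpow_nonneg (le_of_lt hx) _) (norm_nonneg _)
    set w : ℂ := z + 1 with hw
    have hwre : w.re = z.re + 1 := by simp [hw]
    have hwpos : 0 < w.re := by rw [hwre]; linarith
    have hNpos : (0:ℝ) < N := by linarith
    set C1 := Real.exp (w.re / 2 * Real.log 2 + 2 * (w.re + 2 * ‖w‖ + ‖w‖ ^ 2)) * ‖Complex.Gamma w‖
    have hC1n : 0 ≤ C1 := by positivity
    set C2 := Real.Gamma N
    have hC2n : 0 < C2 := Real.Gamma_pos_of_pos hNpos
    refine ⟨(C0 + C1 + C2) * 2 ^ (w.re), by positivity, fun γ => ?_⟩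
    have hint : (∫ x in Set.Ioi (0 : ℝ),
          rieszM z x * Complex.exp ((-(Complex.I * γ) - 1) * Real.log x)) =
        mellin (rieszM z) (-(Complex.I * γ)) :=
      setIntegral_congr_fun measurableSet_Ioi fun x hx => integrand_eq z γ x hx
    rw [hint, norm_mul, ← hwre]
    have hpi : ‖((2 * π : ℝ) : ℂ)⁻¹‖ ≤ 1 := by
      rw [norm_inv, Complex.norm_real, Real.norm_of_nonneg (by positivity)]
      exact inv_le_one_of_one_le₀ (by linarith [Real.pi_gt_three])
    refine (mul_le_of_le_one_left (norm_nonneg _) hpi).trans ?_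
    rcases le_total |γ| 1 with h | h
    · refine (mellin_small z γ).trans ?_
      have h1 : (2:ℝ) ^ (-w.re) ≤ (1 + |γ|) ^ (-w.re) :=
        Real.rpow_le_rpow_of_nonpos (by positivity) (by linarith) (by linarith)
      calc C0 ≤ (C0 + C1 + C2) * 1 := by linarith
        _ = (C0 + C1 + C2) * (2 ^ w.re * 2 ^ (-w.re)) := by
          rw [← Real.rpow_add (by norm_num)]; simp
        _ ≤ (C0 + C1 + C2) * (2 ^ w.re * (1 + |γ|) ^ (-w.re)) := by gcongr
        _ = _ := by ring
    · have hg : γ ≠ 0 := by rintro rfl; norm_num at h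
      have hy0 : 0 < |γ| := by linarith
      have hb : |γ| ^ (-w.re) ≤ 2 ^ w.re * (1 + |γ|) ^ (-w.re) := by
        have h1 : (2 * |γ|) ^ (-w.re) ≤ (1 + |γ|) ^ (-w.re) :=
          Real.rpow_le_rpow_of_nonpos (by positivity) (by linarith) (by linarith)
        rw [Real.mul_rpow (by norm_num) hy0.le] at h1
        calc |γ| ^ (-w.re) = 2 ^ w.re * (2 ^ (-w.re) * |γ| ^ (-w.re)) := by
              rw [← mul_assoc, ← Real.rpow_add (by norm_num)]; simp
          _ ≤ _ := by gcongr
      have hΓ : ‖Complex.Gamma (-(Complex.I * γ))‖ ≤ C2 * |γ| ^ (-w.re) := by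
        have h1 := gamma_decay γ h N
        have h2 := gamma_norm_le (-(Complex.I * γ) + N) (by simpa using hNpos)
        have h3 : (-(Complex.I * (γ:ℂ)) + (N:ℂ)).re = N := by simp
        rw [h3] at h2
        have h4 : |γ| ^ w.re ≤ |γ| ^ N := by
          rw [← Real.rpow_natCast]
          exact Real.rpow_le_rpow_of_exponent_le h (by linarith)
        rw [Real.rpow_neg hy0.le, ← div_eq_mul_inv, le_div_iff₀ (by positivity)]
        calc _ ≤ ‖Complex.Gamma (-(Complex.I * γ))‖ * |γ| ^ N := by gcongr
          _ ≤ _ := h1.trans h2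
      have hr := gamma_ratio_bound w hwpos γ h
      rw [riesz_mellin_im z hz γ hg]
      have h5 : ‖Complex.Gamma (-(Complex.I * γ)) * Complex.Gamma w /
          Complex.Gamma (-(Complex.I * γ) + w)‖ ≤ C1 * |γ| ^ (-w.re) := by
        rw [mul_div_right_comm, norm_mul]
        calc _ ≤ _ := mul_le_mul_of_nonneg_right hr (norm_nonneg _)
          _ = _ := by ring
      calc _ ≤ C1 * |γ| ^ (-w.re) + C2 * |γ| ^ (-w.re) := (norm_sub_le _ _).trans (add_le_add h5 hΓ)
        _ ≤ (C0 + C1 + C2) * |γ| ^ (-w.re) := by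
          have : 0 ≤ C0 * |γ| ^ (-w.re) := by positivity
          linarith
        _ ≤ (C0 + C1 + C2) * (2 ^ w.re * (1 + |γ|) ^ (-w.re)) := by gcongr
        _ = _ := by ring
end

section
/- For every integer a ≥ 1 there exist complex constants c^a_j (1 ≤ j ≤ ⌊a/2⌋), independent of ν, such that for every ν ∈ ℂ with Re ν > −1/2 and every t ∈ ℝ, the a-th derivative of 𝒥_ν satisfies 𝒥_ν^{(a)}(t) = (−1)^a t^a 𝒥_{ν+a}(t) + Σ_{j=1}^{⌊a/2⌋} c^a_j t^{a−2j} 𝒥_{ν+a−j}(t). -/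
open Real MeasureTheory

/-- 𝒥_ν(t) = (2^ν Γ(ν+1/2) Γ(1/2))^{−1} ∫_{−1}^1 e^{ist} (1−s²)^{ν−1/2} ds,
which for t > 0 equals t^{−ν} J_ν(t). -/
noncomputable def Jmod (ν : ℂ) (t : ℝ) : ℂ :=
  ((2 : ℂ) ^ ν * Complex.Gamma (ν + 1 / 2) * Complex.Gamma (1 / 2))⁻¹ *
    ∫ s in (-1 : ℝ)..1, Complex.exp (Complex.I * s * t) * ((1 - s ^ 2 : ℝ) : ℂ) ^ (ν - 1 / 2)

lemma Jw_integrable (μ : ℂ) (hμ : -1 < μ.re) :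
    IntervalIntegrable (fun s : ℝ => ((1 - s ^ 2 : ℝ) : ℂ) ^ μ) volume (-1) 1 := by
  have h := Complex.betaIntegral_convergent (u := μ + 1) (v := μ + 1)
    (by simp; linarith) (by simp; linarith)
  have h2 := (h.comp_mul_left (c := 1 / 2)).comp_add_right 1
  norm_num at h2
  refine (h2.const_mul ((4 : ℂ) ^ μ)).congr_uIoo ?_
  intro s hs
  rw [Set.uIoo_of_le (by norm_num)] at hs
  obtain ⟨h3, h4⟩ := hs
  have e1 : (1 / 2 * ((s : ℂ) + 1)) = ((1 / 2 * (s + 1) : ℝ) : ℂ) := by push_cast; ring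
  have e2 : (1 - 1 / 2 * ((s : ℂ) + 1)) = ((1 / 2 * (1 - s) : ℝ) : ℂ) := by push_cast; ring
  have e3 : (4 : ℂ) = ((4 : ℝ) : ℂ) := by norm_num
  simp only
  rw [e2, e1, e3, ← Complex.mul_cpow_ofReal_nonneg (by linarith) (by linarith),
    ← Complex.ofReal_mul, ← Complex.mul_cpow_ofReal_nonneg (by norm_num) (by nlinarith),
    ← Complex.ofReal_mul]
  congr 2
  ring

lemma Jint_hasDerivAt (μ : ℂ) (hμ : -1 < μ.re) (t : ℝ) :
    HasDerivAt (fun t : ℝ => ∫ s in (-1 : ℝ)..1,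
        Complex.exp (Complex.I * s * t) * ((1 - s ^ 2 : ℝ) : ℂ) ^ μ)
      (∫ s in (-1 : ℝ)..1,
        (Complex.I * s * Complex.exp (Complex.I * s * t)) * ((1 - s ^ 2 : ℝ) : ℂ) ^ μ) t := by
  have hw := Jw_integrable μ hμ
  have i1 : ∀ t : ℝ, IntervalIntegrable (fun s : ℝ =>
      Complex.exp (Complex.I * s * t) * ((1 - s ^ 2 : ℝ) : ℂ) ^ μ) volume (-1) 1 := fun t =>
    hw.continuousOn_mul (by fun_prop)
  have i2 : IntervalIntegrable (fun s : ℝ =>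
      (Complex.I * s * Complex.exp (Complex.I * s * t)) * ((1 - s ^ 2 : ℝ) : ℂ) ^ μ)
      volume (-1) 1 :=
    hw.continuousOn_mul (by fun_prop)
  refine (intervalIntegral.hasDerivAt_integral_of_dominated_loc_of_deriv_le
    (F := fun (t : ℝ) (s : ℝ) => Complex.exp (Complex.I * s * t) * ((1 - s ^ 2 : ℝ) : ℂ) ^ μ)
    (F' := fun (t : ℝ) (s : ℝ) => (Complex.I * s * Complex.exp (Complex.I * s * t)) *
      ((1 - s ^ 2 : ℝ) : ℂ) ^ μ)
    (bound := fun s : ℝ => ‖((1 - s ^ 2 : ℝ) : ℂ) ^ μ‖)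
    (s := Set.univ) Filter.univ_mem ?_ (i1 t) ?_ ?_ hw.norm ?_).2
  · exact Filter.Eventually.of_forall fun t => (intervalIntegrable_iff.1 (i1 t)).aestronglyMeasurable
  · exact (intervalIntegrable_iff.1 i2).aestronglyMeasurable
  · refine Filter.Eventually.of_forall fun s hs x _ => ?_
    rw [Set.uIoc_of_le (by norm_num)] at hs
    have e : Complex.I * s * x = ((s * x : ℝ) : ℂ) * Complex.I := by push_cast; ring
    rw [norm_mul, norm_mul, norm_mul, e, Complex.norm_exp_ofReal_mul_I, Complex.norm_I, one_mul,
      mul_one, Complex.norm_real, Real.norm_eq_abs]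
    exact mul_le_of_le_one_left (norm_nonneg _) (abs_le.2 ⟨hs.1.le, hs.2⟩)
  · refine Filter.Eventually.of_forall fun s hs x _ => ?_
    have h1 : HasDerivAt (fun x : ℝ => Complex.I * s * (x : ℂ)) (Complex.I * s) x := by
      simpa using (Complex.ofRealCLM.hasDerivAt (x := x)).const_mul (Complex.I * s)
    have h2 := (h1.cexp).mul_const (((1 - s ^ 2 : ℝ) : ℂ) ^ μ)
    refine h2.congr_deriv ?_
    ring

lemma Jint_parts (μ : ℂ) (hμ : -1 < μ.re) (t : ℝ) :
    (∫ s in (-1 : ℝ)..1,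
        (Complex.I * s * Complex.exp (Complex.I * s * t)) * ((1 - s ^ 2 : ℝ) : ℂ) ^ μ) =
      -(t : ℂ) / (2 * (μ + 1)) * ∫ s in (-1 : ℝ)..1,
        Complex.exp (Complex.I * s * t) * ((1 - s ^ 2 : ℝ) : ℂ) ^ (μ + 1) := by
  have hre : 0 < (μ + 1).re := by simp; linarith
  have hne : μ + 1 ≠ 0 := fun h => by simp [h] at hre
  have hw := Jw_integrable μ hμ
  have key := intervalIntegral.integral_mul_deriv_eq_deriv_mul_of_hasDerivAt
    (a := -1) (b := 1)
    (u := fun s : ℝ => Complex.exp (Complex.I * s * t))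
    (u' := fun s : ℝ => Complex.I * t * Complex.exp (Complex.I * s * t))
    (v := fun s : ℝ => ((1 - s ^ 2 : ℝ) : ℂ) ^ (μ + 1) / (μ + 1))
    (v' := fun s : ℝ => (-2 * s : ℂ) * ((1 - s ^ 2 : ℝ) : ℂ) ^ μ)
    (by fun_prop) ?_ ?_ ?_ ?_ ?_
  · have z : ((1 - (1:ℝ) ^ 2 : ℝ) : ℂ) ^ (μ + 1) = 0 := by
      simp [Complex.zero_cpow hne]
    have z' : ((1 - (-1:ℝ) ^ 2 : ℝ) : ℂ) ^ (μ + 1) = 0 := by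
      simp [Complex.zero_cpow hne]
    rw [z, z'] at key
    simp only [zero_div, mul_zero, sub_zero, zero_sub] at key
    have l : (∫ s in (-1 : ℝ)..1,
        (Complex.I * s * Complex.exp (Complex.I * s * t)) * ((1 - s ^ 2 : ℝ) : ℂ) ^ μ) =
        (-Complex.I / 2) * ∫ s in (-1 : ℝ)..1, Complex.exp (Complex.I * s * t) *
          ((-2 * s : ℂ) * ((1 - s ^ 2 : ℝ) : ℂ) ^ μ) := by
      rw [← intervalIntegral.integral_const_mul]
      congr 1; ext s; ring
    have r : (∫ s in (-1 : ℝ)..1, Complex.I * t * Complex.exp (Complex.I * s * t) *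
          (((1 - s ^ 2 : ℝ) : ℂ) ^ (μ + 1) / (μ + 1))) = (Complex.I * t / (μ + 1)) *
        ∫ s in (-1 : ℝ)..1,
        Complex.exp (Complex.I * s * t) * ((1 - s ^ 2 : ℝ) : ℂ) ^ (μ + 1) := by
      rw [← intervalIntegral.integral_const_mul]
      congr 1; ext s; ring
    rw [l, key, r]
    generalize (∫ s in (-1 : ℝ)..1,
        Complex.exp (Complex.I * s * t) * ((1 - s ^ 2 : ℝ) : ℂ) ^ (μ + 1)) = X
    field_simp
    linear_combination (t : ℂ) * X * Complex.I_sq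
  · refine Continuous.continuousOn (Continuous.div_const ?_ _)
    refine continuous_iff_continuousAt.2 fun s => ?_
    exact ContinuousAt.comp (f := fun s : ℝ => 1 - s ^ 2) (g := fun x : ℝ => (x : ℂ) ^ (μ + 1))
      (Complex.continuousAt_ofReal_cpow_const _ _ (Or.inl hre)) (by fun_prop)
  · intro s _
    have h1 : HasDerivAt (fun s : ℝ => Complex.I * s * (t : ℂ)) (Complex.I * t) s := by
      simpa using ((Complex.ofRealCLM.hasDerivAt (x := s)).const_mul Complex.I).mul_const (t : ℂ)
    refine h1.cexp.congr_deriv ?_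
    ring
  · intro s hs
    norm_num at hs
    have hs0 : (1 - s ^ 2) ≠ 0 := by nlinarith [hs.1, hs.2]
    have h1 : HasDerivAt (fun s : ℝ => 1 - s ^ 2) (-(2 * s)) s := by
      simpa using (hasDerivAt_pow 2 s).const_sub 1
    have hμ1 : μ ≠ -1 := fun h => hne (by rw [h]; ring)
    have h2 := (hasDerivAt_ofReal_cpow_const' hs0 hμ1).scomp s h1
    refine h2.congr_deriv ?_
    simp
  · exact Continuous.intervalIntegrable (by fun_prop) _ _
  · exact hw.continuousOn_mul (by fun_prop)

lemma Jmod_hasDerivAt (ν : ℂ) (hν : -(1 / 2) < ν.re) (t : ℝ) :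
    HasDerivAt (Jmod ν) (-(t : ℂ) * Jmod (ν + 1) t) t := by
  have hμ : -1 < (ν - 1 / 2).re := by simp; linarith
  have hne : ν + 1 / 2 ≠ 0 := fun h => by
    have := congrArg Complex.re h
    simp at this; linarith
  have h := (Jint_hasDerivAt (ν - 1 / 2) hμ t).const_mul
    ((2 : ℂ) ^ ν * Complex.Gamma (ν + 1 / 2) * Complex.Gamma (1 / 2))⁻¹
  rw [Jint_parts _ hμ] at h
  refine h.congr_deriv ?_
  unfold Jmod
  have e1 : ν + 1 + 1 / 2 = (ν + 1 / 2) + 1 := by ring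
  have e2 : ν + 1 - 1 / 2 = ν - 1 / 2 + 1 := by ring
  have e3 : ν - 1 / 2 + 1 = ν + 1 / 2 := by ring
  rw [e1, e2, Complex.Gamma_add_one _ hne, Complex.cpow_add _ _ two_ne_zero, Complex.cpow_one, e3]
  simp only [mul_inv, div_eq_mul_inv]
  ring

/-- The coefficients. -/
noncomputable def Jcoef : ℕ → ℕ → ℂ
  | 0, 0 => 1
  | 0, _ + 1 => 0
  | a + 1, 0 => -Jcoef a 0
  | a + 1, j + 1 => -Jcoef a (j + 1) + ((a - 2 * j : ℕ) : ℂ) * Jcoef a j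

lemma Jcoef_zero (a : ℕ) : Jcoef a 0 = (-1) ^ a := by
  induction a with
  | zero => simp [Jcoef]
  | succ a ih => rw [Jcoef, ih]; ring

lemma Jcoef_vanish (a : ℕ) : ∀ j, a < 2 * j → Jcoef a j = 0 := by
  induction a with
  | zero =>
    intro j hj
    cases j with
    | zero => omega
    | succ j => rfl
  | succ a ih =>
    intro j hj
    cases j with
    | zero => omega
    | succ j =>
      rw [Jcoef, ih _ (by omega), show a - 2 * j = 0 by omega]
      simp

lemma Jmod_iter (ν : ℂ) (hν : -(1 / 2) < ν.re) (a : ℕ) :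
    iteratedDeriv a (Jmod ν) = fun t : ℝ =>
      ∑ j ∈ Finset.range (a + 1), Jcoef a j * (t : ℂ) ^ (a - 2 * j) * Jmod (ν + a - j) t := by
  induction a with
  | zero => ext t; simp [Jcoef]
  | succ a ih =>
    ext t
    rw [iteratedDeriv_succ, ih]
    have hd : ∀ j ∈ Finset.range (a + 1), HasDerivAt
        (fun t : ℝ => Jcoef a j * (t : ℂ) ^ (a - 2 * j) * Jmod (ν + a - j) t)
        (((a - 2 * j : ℕ) : ℂ) * Jcoef a j * (t : ℂ) ^ (a + 1 - 2 * (j + 1)) *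
            Jmod (ν + (a + 1 : ℕ) - (j + 1 : ℕ)) t +
          -Jcoef a j * (t : ℂ) ^ (a + 1 - 2 * j) * Jmod (ν + (a + 1 : ℕ) - j) t) t := by
      intro j hj
      have hj' : (j : ℝ) ≤ a := by
        exact_mod_cast Nat.lt_succ_iff.1 (Finset.mem_range.1 hj)
      have hJ := Jmod_hasDerivAt (ν + a - j) (by simp; linarith) t
      have hp : HasDerivAt (fun t : ℝ => (t : ℂ) ^ (a - 2 * j))
          (((a - 2 * j : ℕ) : ℂ) * (t : ℂ) ^ (a - 2 * j - 1)) t := by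
        simpa using (hasDerivAt_pow (a - 2 * j) (t : ℂ)).comp_ofReal
      refine ((hp.const_mul (Jcoef a j)).mul hJ).congr_deriv ?_
      have e1 : ν + (a + 1 : ℕ) - (j + 1 : ℕ) = ν + a - j := by push_cast; ring
      have e2 : ν + (a + 1 : ℕ) - j = ν + a - j + 1 := by push_cast; ring
      rw [e1, e2, show a + 1 - 2 * (j + 1) = a - 2 * j - 1 by omega]
      by_cases h : a < 2 * j
      · simp [Jcoef_vanish a j h]
      · rw [show a + 1 - 2 * j = a - 2 * j + 1 by omega]
        ring
    rw [(HasDerivAt.fun_sum hd).deriv, Finset.sum_add_distrib, Finset.sum_range_succ' _ (a + 1)]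
    have s2 : ∑ j ∈ Finset.range (a + 1),
        -Jcoef a j * (t : ℂ) ^ (a + 1 - 2 * j) * Jmod (ν + (a + 1 : ℕ) - j) t =
        ∑ j ∈ Finset.range (a + 1 + 1),
        -Jcoef a j * (t : ℂ) ^ (a + 1 - 2 * j) * Jmod (ν + (a + 1 : ℕ) - j) t := by
      rw [Finset.sum_range_succ _ (a + 1), Jcoef_vanish a (a + 1) (by omega)]
      simp
    rw [s2, Finset.sum_range_succ' _ (a + 1), ← add_assoc, ← Finset.sum_add_distrib]
    congr 1
    refine Finset.sum_congr rfl fun j _ => ?_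
    rw [Jcoef]
    ring

/-- For every a ≥ 1 there are complex constants c^a_j (1 ≤ j ≤ ⌊a/2⌋), independent of ν,
such that 𝒥_ν^{(a)}(t) = (−1)^a t^a 𝒥_{ν+a}(t) + Σ_{j=1}^{⌊a/2⌋} c^a_j t^{a−2j} 𝒥_{ν+a−j}(t)
for every ν with Re ν > −1/2 and every t ∈ ℝ. -/
theorem Jmod_iteratedDeriv (a : ℕ) (ha : 1 ≤ a) :
    ∃ c : ℕ → ℂ, ∀ ν : ℂ, -(1 / 2) < ν.re → ∀ t : ℝ,
      iteratedDeriv a (Jmod ν) t =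
        (-1) ^ a * (t : ℂ) ^ a * Jmod (ν + a) t +
          ∑ j ∈ Finset.Icc 1 (a / 2), c j * (t : ℂ) ^ (a - 2 * j) * Jmod (ν + a - j) t := by
  refine ⟨Jcoef a, fun ν hν t => ?_⟩
  rw [Jmod_iter ν hν a]
  have hs : ∑ j ∈ Finset.range (a / 2 + 1),
      Jcoef a j * (t : ℂ) ^ (a - 2 * j) * Jmod (ν + a - j) t =
      ∑ j ∈ Finset.range (a + 1),
      Jcoef a j * (t : ℂ) ^ (a - 2 * j) * Jmod (ν + a - j) t := by
    refine Finset.sum_subset (Finset.range_subset_range.2 (by omega)) fun j _ hj => ?_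
    rw [Finset.mem_range] at hj
    rw [Jcoef_vanish a j (by omega)]
    simp
  simp only
  rw [← hs, Finset.range_eq_Ico, Finset.sum_eq_sum_Ico_succ_bot (by omega), Jcoef_zero]
  congr 1
  simp
end

section
/- Let μ ∈ ℂ with Re μ > −1/2. There exists a constant c_μ > 0 such that |𝒥_μ(t)| ≤ c_μ t^{−(Re μ + 1/2)} for all t > 0. -/
open Real MeasureTheory

lemma JF_pow (q : ℂ) (t : ℝ) (ht : 0 < t) :
      HasDerivAt (fun t : ℝ => (t : ℂ) ^ q) (q * (t : ℂ) ^ (q - 1)) t := by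
  have := ((hasDerivAt_id (t : ℂ)).cpow_const (c := q) (Or.inl (by simpa using ht))).comp_ofReal
  simpa using this

noncomputable def JF (α : ℂ) (n : ℕ) (t : ℝ) : ℂ :=
  ∫ s in (-1 : ℝ)..1, ((Complex.I * s) ^ n * Complex.exp (Complex.I * s * t)) *
    ((1 - s ^ 2 : ℝ) : ℂ) ^ α

lemma JF_w_int (α : ℂ) (h : -1 < α.re) :
    IntervalIntegrable (fun s : ℝ => ((1 - s ^ 2 : ℝ) : ℂ) ^ α) volume (-1) 1 := by
  have hb := Complex.betaIntegral_convergent (u := α + 1) (v := α + 1)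
    (by simp; linarith) (by simp; linarith)
  have h1 := (hb.comp_mul_left (c := (1 / 2 : ℝ)))
  have h2 := (h1.comp_add_right 1).const_mul ((4 : ℂ) ^ α)
  norm_num at h2
  refine h2.congr_uIoo ?_
  intro s hs
  rw [Set.uIoo_of_le (by norm_num)] at hs
  obtain ⟨ha, hb⟩ := hs
  have e1 : (1 / 2 : ℂ) * (s + 1) = (((1 / 2) * (s + 1) : ℝ) : ℂ) := by push_cast; ring
  have e2 : 1 - (1 / 2 : ℂ) * (s + 1) = (((1 / 2) * (1 - s) : ℝ) : ℂ) := by push_cast; ring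
  have e3 : (1 - s ^ 2 : ℝ) = 4 * (((1 / 2) * (s + 1)) * ((1 / 2) * (1 - s))) := by ring
  simp only
  have m1 := Complex.mul_cpow_ofReal_nonneg (a := 4)
    (b := ((1 / 2) * (s + 1)) * ((1 / 2) * (1 - s))) (by norm_num)
    (by apply mul_nonneg <;> linarith) α
  have m2 := Complex.mul_cpow_ofReal_nonneg (a := (1 / 2) * (s + 1))
    (b := (1 / 2) * (1 - s)) (by linarith) (by linarith) α
  rw [← Complex.ofReal_mul] at m1 m2
  rw [e2, e1, e3, m1, m2]
  norm_num

lemma JF_int (α : ℂ) (h : -1 < α.re) (n : ℕ) (t : ℝ) :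
    IntervalIntegrable (fun s : ℝ => ((Complex.I * s) ^ n * Complex.exp (Complex.I * s * t)) *
    ((1 - s ^ 2 : ℝ) : ℂ) ^ α) volume (-1) 1 := by
  apply (JF_w_int α h).continuousOn_mul
  fun_prop

lemma JF_norm (n : ℕ) (s t : ℝ) (hs : s ∈ Set.uIoc (-1 : ℝ) 1) :
    ‖((Complex.I * s) ^ n * Complex.exp (Complex.I * s * t))‖ ≤ 1 := by
  rw [Set.uIoc_of_le (by norm_num)] at hs
  have : Complex.I * s * t = ((s * t : ℝ) : ℂ) * Complex.I := by push_cast; ring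
  rw [norm_mul, this, Complex.norm_exp_ofReal_mul_I, norm_pow, norm_mul, Complex.norm_I,
    Complex.norm_real, mul_one, one_mul]
  exact pow_le_one₀ (norm_nonneg _) (abs_le.2 ⟨hs.1.le, hs.2⟩)

lemma JF_deriv (α : ℂ) (h : -1 < α.re) (n : ℕ) (t : ℝ) :
    HasDerivAt (JF α n) (JF α (n + 1) t) t := by
  have := intervalIntegral.hasDerivAt_integral_of_dominated_loc_of_deriv_le
    (μ := volume) (a := (-1 : ℝ)) (b := 1) (x₀ := t) (s := Set.univ)
    (F := fun t s : ℝ => ((Complex.I * s) ^ n * Complex.exp (Complex.I * s * t)) *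
    ((1 - s ^ 2 : ℝ) : ℂ) ^ α)
    (F' := fun t s : ℝ => ((Complex.I * s) ^ (n + 1) * Complex.exp (Complex.I * s * t)) *
    ((1 - s ^ 2 : ℝ) : ℂ) ^ α)
    (bound := fun s : ℝ => ‖((1 - s ^ 2 : ℝ) : ℂ) ^ α‖)
    Filter.univ_mem
    (Filter.Eventually.of_forall fun x => (JF_int α h n x).def'.aestronglyMeasurable)
    (JF_int α h n t) ((JF_int α h (n + 1) t).def'.aestronglyMeasurable)
    (Filter.Eventually.of_forall fun s hs x _ => by
      rw [norm_mul]
      exact mul_le_of_le_one_left (norm_nonneg _) (JF_norm _ _ _ hs))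
    (JF_w_int α h).norm
    (Filter.Eventually.of_forall fun s hs x _ => by
      apply HasDerivAt.mul_const
      have h1 : HasDerivAt (fun x : ℝ => Complex.I * s * (x : ℂ)) (Complex.I * s * 1) x :=
        (Complex.ofRealCLM.hasDerivAt (x := x)).const_mul _
      have h2 := (h1.cexp).const_mul ((Complex.I * (s : ℂ)) ^ n)
      convert h2 using 1
      ring)
  exact this.2

lemma JF_ode (α : ℂ) (h : -1 < α.re) (t : ℝ) :
    t * (JF α 0 t + JF α 2 t) + 2 * (α + 1) * JF α 1 t = 0 := by
  have hp : α + 1 ≠ 0 := fun h0 => by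
    have := congrArg Complex.re h0
    simp at this; linarith
  have key := intervalIntegral.integral_eq_sub_of_hasDerivAt_of_le (a := (-1 : ℝ)) (b := 1)
    (by norm_num)
    (f := fun s : ℝ => Complex.exp (Complex.I * s * t) * ((1 - s ^ 2 : ℝ) : ℂ) ^ (α + 1))
    (f' := fun s : ℝ => Complex.I * t * (((Complex.I * s) ^ 0 * Complex.exp (Complex.I * s * t)) *
      ((1 - s ^ 2 : ℝ) : ℂ) ^ α + ((Complex.I * s) ^ 2 * Complex.exp (Complex.I * s * t)) *
      ((1 - s ^ 2 : ℝ) : ℂ) ^ α) + Complex.I * 2 * (α + 1) * (((Complex.I * s) ^ 1 *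
        Complex.exp (Complex.I * s * t)) * ((1 - s ^ 2 : ℝ) : ℂ) ^ α))
    (by
      apply Continuous.continuousOn
      apply Continuous.mul (by fun_prop)
      have : Continuous fun x : ℝ => (x : ℂ) ^ (α + 1) :=
        Complex.continuous_ofReal_cpow_const (by simp; linarith)
      exact this.comp (f := fun s : ℝ => 1 - s ^ 2) (by fun_prop))
    (by
      intro s hs
      have hpos : 0 < 1 - s ^ 2 := by nlinarith [hs.1, hs.2]
      have h1 : HasDerivAt (fun s : ℝ => Complex.I * (s : ℂ) * t) (Complex.I * 1 * t) s :=
        ((Complex.ofRealCLM.hasDerivAt (x := s)).const_mul _).mul_const _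
      have h2 : HasDerivAt (fun s : ℝ => 1 - s ^ 2) (-(2 * s)) s := by
        have := ((hasDerivAt_id s).pow 2).const_sub 1
        simpa using this
      have h3 := (JF_pow (α + 1) (1 - s ^ 2) hpos).scomp s h2
      have h4 := h1.cexp.mul h3
      have hne : ((1 - s ^ 2 : ℝ) : ℂ) ≠ 0 := by exact_mod_cast hpos.ne'
      refine HasDerivAt.congr_deriv h4 (Eq.symm ?_)
      simp only [Function.comp_apply, Complex.real_smul]
      rw [add_sub_cancel_right, Complex.cpow_add _ _ hne, Complex.cpow_one]
      push_cast
      linear_combination (Complex.I * t * Complex.exp (Complex.I * s * t) *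
        (1 - (s : ℂ) ^ 2) ^ α * s ^ 2 + 2 * (α + 1) * s * Complex.exp (Complex.I * s * t) *
        (1 - (s : ℂ) ^ 2) ^ α) * Complex.I_sq)
    ((((JF_int α h 0 t).add (JF_int α h 2 t)).const_mul _).add ((JF_int α h 1 t).const_mul _))
  rw [intervalIntegral.integral_add
    (((JF_int α h 0 t).add (JF_int α h 2 t)).const_mul _) ((JF_int α h 1 t).const_mul _),
    intervalIntegral.integral_const_mul, intervalIntegral.integral_const_mul,
    intervalIntegral.integral_add (JF_int α h 0 t) (JF_int α h 2 t)] at key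
  change Complex.I * t * (JF α 0 t + JF α 2 t) + Complex.I * 2 * (α + 1) * JF α 1 t = _ at key
  norm_num [Complex.zero_cpow hp] at key
  apply mul_left_cancel₀ Complex.I_ne_zero
  linear_combination key

lemma gron (c : ℂ) (u v : ℝ → ℂ) (hu : ∀ t, 0 < t → HasDerivAt u (v t) t)
    (hv : ∀ t, 0 < t → HasDerivAt v (-u t + c * ((t ^ 2 : ℝ) : ℂ)⁻¹ * u t) t) :
    ∃ C : ℝ, 0 ≤ C ∧ ∀ t, 1 ≤ t → ‖u t‖ ≤ C := by
  let G : ℝ → ℝ := fun t => Real.exp (‖c‖ * t⁻¹) * (‖u t‖ ^ 2 + ‖v t‖ ^ 2)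
  have hG : ∀ t, 0 < t → HasDerivAt G (Real.exp (‖c‖ * t⁻¹) * (‖c‖ * -(t ^ 2)⁻¹) *
      (‖u t‖ ^ 2 + ‖v t‖ ^ 2) + Real.exp (‖c‖ * t⁻¹) * (2 * inner ℝ (u t) (v t) +
      2 * inner ℝ (v t) (-u t + c * ((t ^ 2 : ℝ) : ℂ)⁻¹ * u t))) t := fun t ht =>
    (((hasDerivAt_inv ht.ne').const_mul ‖c‖).exp).mul ((hu t ht).norm_sq.add (hv t ht).norm_sq)
  have hanti : AntitoneOn G (Set.Ici 1) := by
    apply antitoneOn_of_deriv_nonpos (convex_Ici 1)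
    · intro t ht
      exact (hG t (lt_of_lt_of_le one_pos ht)).continuousAt.continuousWithinAt
    · intro t ht
      rw [interior_Ici] at ht
      exact (hG t (one_pos.trans ht)).differentiableAt.differentiableWithinAt
    · intro t ht
      rw [interior_Ici] at ht
      have ht0 : 0 < t := one_pos.trans ht
      rw [(hG t ht0).deriv, mul_assoc, ← mul_add]
      apply mul_nonpos_of_nonneg_of_nonpos (Real.exp_pos _).le
      rw [inner_add_right, inner_neg_right, real_inner_comm]
      have h1 := real_inner_le_norm (v t) (c * ((t ^ 2 : ℝ) : ℂ)⁻¹ * u t)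
      rw [norm_mul, norm_mul, norm_inv, Complex.norm_real, Real.norm_of_nonneg (sq_nonneg t)] at h1
      have h2 : 0 ≤ ‖c‖ * (t ^ 2)⁻¹ * (‖u t‖ - ‖v t‖) ^ 2 := by positivity
      nlinarith
  refine ⟨Real.sqrt (G 1), Real.sqrt_nonneg _, fun t ht => ?_⟩
  apply Real.le_sqrt_of_sq_le
  refine le_trans ?_ (hanti (Set.self_mem_Ici) ht ht)
  have : 1 ≤ Real.exp (‖c‖ * t⁻¹) := Real.one_le_exp (by positivity)
  have h3 : 0 ≤ ‖v t‖ ^ 2 := by positivity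
  have h4 : 0 ≤ ‖u t‖ ^ 2 := by positivity
  simp only [G]
  nlinarith

lemma JF_decay (α : ℂ) (h : -1 < α.re) :
    ∃ C : ℝ, 0 ≤ C ∧ ∀ t : ℝ, 0 < t → ‖JF α 0 t‖ ≤ C * t ^ (-(α.re + 1)) := by
  have hpw := JF_pow
  obtain ⟨C, hC, hb⟩ := gron ((α + 1) * α) (fun t => (t : ℂ) ^ (α + 1) * JF α 0 t)
    (fun t => (α + 1) * (t : ℂ) ^ (α + 1 - 1) * JF α 0 t + (t : ℂ) ^ (α + 1) * JF α 1 t)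
    (fun t ht => (hpw (α + 1) t ht).mul (JF_deriv α h 0 t))
    (fun t ht => by
      have h1 := (((hpw (α + 1 - 1) t ht).const_mul (α + 1)).mul (JF_deriv α h 0 t)).add
        ((hpw (α + 1) t ht).mul (JF_deriv α h 1 t))
      have ht' : (t : ℂ) ≠ 0 := by exact_mod_cast ht.ne'
      have ode := JF_ode α h t
      refine HasDerivAt.congr_deriv h1 (Eq.symm ?_)
      have e1 : (t : ℂ) ^ (α + 1) = t ^ 2 * t ^ (α - 1) := by
        rw [← Complex.cpow_natCast, ← Complex.cpow_add _ _ ht']; congr 1; push_cast; ring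
      have e2 : (t : ℂ) ^ α = t * t ^ (α - 1) := by
        conv_rhs => enter [1]; rw [← Complex.cpow_one (t : ℂ)]
        rw [← Complex.cpow_add _ _ ht']; congr 1; ring
      simp only [add_sub_cancel_right, zero_add, Nat.reduceAdd]
      rw [e1, e2]
      push_cast
      field_simp
      linear_combination (-(t : ℂ) * (t : ℂ) ^ (α - 1)) * ode)
  let M : ℝ := ∫ s in (-1 : ℝ)..1, ‖((1 - s ^ 2 : ℝ) : ℂ) ^ α‖
  have hM : ∀ t, ‖JF α 0 t‖ ≤ M := fun t => by
    apply intervalIntegral.norm_integral_le_of_norm_le (by norm_num) _ (JF_w_int α h).norm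
    refine Filter.Eventually.of_forall fun s hs => ?_
    rw [norm_mul]
    refine mul_le_of_le_one_left (norm_nonneg _) (JF_norm _ _ _ ?_)
    rwa [Set.uIoc_of_le (by norm_num)]
  have hM0 : 0 ≤ M := (norm_nonneg _).trans (hM 0)
  refine ⟨C + M, by positivity, fun t ht => ?_⟩
  have hpos : 0 < t ^ (-(α.re + 1)) := Real.rpow_pos_of_pos ht _
  rcases le_total 1 t with h1 | h1
  · have := hb t h1
    rw [norm_mul, Complex.norm_cpow_eq_rpow_re_of_pos ht] at this
    simp only [Complex.add_re, Complex.one_re] at this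
    have h3 : ‖JF α 0 t‖ ≤ C * t ^ (-(α.re + 1)) := by
      rw [Real.rpow_neg ht.le, ← div_eq_mul_inv, le_div_iff₀ (Real.rpow_pos_of_pos ht _), mul_comm]
      exact this
    nlinarith
  · have : 1 ≤ t ^ (-(α.re + 1)) := Real.one_le_rpow_of_pos_of_le_one_of_nonpos ht h1 (by linarith)
    nlinarith [hM t]

/-- For Re μ > −1/2 there is c_μ > 0 with |𝒥_μ(t)| ≤ c_μ t^{−(Re μ + 1/2)} for all t > 0. -/
theorem Jmod_decay (μ : ℂ) (hμ : -(1 / 2) < μ.re) :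
    ∃ c : ℝ, 0 < c ∧ ∀ t : ℝ, 0 < t → ‖Jmod μ t‖ ≤ c * t ^ (-(μ.re + 1 / 2)) := by
  have hre : (μ - 1 / 2).re = μ.re - 1 / 2 := by norm_num
  obtain ⟨C, hC, hb⟩ := JF_decay (μ - 1 / 2) (by rw [hre]; linarith)
  let K := ((2 : ℂ) ^ μ * Complex.Gamma (μ + 1 / 2) * Complex.Gamma (1 / 2))⁻¹
  refine ⟨‖K‖ * C + 1, by positivity, fun t ht => ?_⟩
  have e : Jmod μ t = K * JF (μ - 1 / 2) 0 t := by simp only [Jmod, JF, K, pow_zero, one_mul]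
  have h1 := hb t ht
  rw [hre, show μ.re - 1 / 2 + 1 = μ.re + 1 / 2 by ring] at h1
  have hpos : 0 < t ^ (-(μ.re + 1 / 2)) := Real.rpow_pos_of_pos ht _
  rw [e, norm_mul]
  have := mul_le_mul_of_nonneg_left h1 (norm_nonneg K)
  linarith
end

section
/- Let l ≥ 1 and k ≥ 0 be integers, ρ₀ ≥ 0, and z ∈ ℂ with Re z ≥ 0. There exists a constant c > 0 such that for all R > ρ₀² and all a > 0, ( ∫_{‖H‖ > a} ( Σ_{|α| ≤ 2k} |∂_H^α [ 𝒥_{z+l/2}(√(R − ρ₀²) ‖H‖) ]| )² dH )^{1/2} ≤ c ( Σ_{m=0}^{2k} (R − ρ₀²)^{m/2} ) (R − ρ₀²)^{−(Re z/2 + (l+1)/4)} a^{−Re z − 1/2}. -/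
open Real MeasureTheory

/-- Iterated partial derivative of a function on ℝ^l along a list of coordinate directions. -/
noncomputable def mderiv {l : ℕ} : List (Fin l) → (EuclideanSpace ℝ (Fin l) → ℂ) →
    EuclideanSpace ℝ (Fin l) → ℂ
  | [], f => f
  | i :: L, f => fun x => fderiv ℝ (mderiv L f) x (EuclideanSpace.single i 1)

/-- The partial derivative ∂^α of a function on ℝ^l associated with the multi-index
α : Fin l → ℕ (α i derivatives in the i-th coordinate direction). -/
noncomputable def partialD {l : ℕ} (α : Fin l → ℕ) (f : EuclideanSpace ℝ (Fin l) → ℂ) :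
    EuclideanSpace ℝ (Fin l) → ℂ :=
  mderiv ((List.finRange l).flatMap fun i => List.replicate (α i) i) f

noncomputable def II (μ : ℂ) (t : ℝ) : ℂ :=
  ∫ s in (-1 : ℝ)..1, Complex.exp (Complex.I * s * t) * ((1 - s ^ 2 : ℝ) : ℂ) ^ μ

lemma w_norm_le {μ : ℂ} (hμ : 0 ≤ μ.re) {s : ℝ} (hs : s ∈ Set.Ioo (-1:ℝ) 1) :
    ‖((1 - s ^ 2 : ℝ) : ℂ) ^ μ‖ ≤ 1 := by
  have h1 : 0 < 1 - s ^ 2 := by nlinarith [hs.1, hs.2]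
  rw [Complex.norm_cpow_eq_rpow_re_of_pos h1]
  exact Real.rpow_le_one h1.le (by nlinarith [sq_nonneg s]) hμ

lemma ae_Ioo : ∀ᵐ s : ℝ, s ∈ Set.uIoc (-1:ℝ) 1 → s ∈ Set.Ioo (-1:ℝ) 1 := by
  have : ∀ᵐ s : ℝ, s ≠ 1 := by
    exact Measure.ae_ne volume 1
  filter_upwards [this] with s hs h
  rw [Set.uIoc_of_le (by norm_num)] at h
  exact ⟨h.1, lt_of_le_of_ne h.2 hs⟩

lemma bdd_intInt {f : ℝ → ℂ} (hf : Measurable f) (C : ℝ)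
    (hb : ∀ s ∈ Set.Ioo (-1:ℝ) 1, ‖f s‖ ≤ C) : IntervalIntegrable f volume (-1) 1 := by
  rw [intervalIntegrable_iff_integrableOn_Ioo_of_le (by norm_num)]
  refine Measure.integrableOn_of_bounded (M := C) (by simp) hf.aestronglyMeasurable ?_
  exact (ae_restrict_iff' measurableSet_Ioo).2 (Filter.Eventually.of_forall hb)

lemma norm_e (s t : ℝ) : ‖Complex.exp (Complex.I * s * t)‖ = 1 := by
  have : Complex.I * s * t = ((s * t : ℝ) : ℂ) * Complex.I := by push_cast; ring
  rw [this, Complex.norm_exp_ofReal_mul_I]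

lemma hasDerivAt_osc {w : ℝ → ℂ} (hw : Measurable w)
    (hb : ∀ s ∈ Set.Ioo (-1:ℝ) 1, ‖w s‖ ≤ 1) (t : ℝ) :
    HasDerivAt (fun t : ℝ => ∫ s in (-1 : ℝ)..1, Complex.exp (Complex.I * s * t) * w s)
      (∫ s in (-1 : ℝ)..1, Complex.exp (Complex.I * s * t) * (Complex.I * s * w s)) t := by
  have hm : ∀ t : ℝ, Measurable (fun s : ℝ => Complex.exp (Complex.I * s * t) * w s) := by
    intro t; fun_prop
  have hm' : ∀ t : ℝ, Measurable
      (fun s : ℝ => Complex.exp (Complex.I * s * t) * (Complex.I * s * w s)) := by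
    intro t; fun_prop
  refine (intervalIntegral.hasDerivAt_integral_of_dominated_loc_of_deriv_le (𝕜 := ℝ) (E := ℂ)
    (F := fun (t s : ℝ) => Complex.exp (Complex.I * s * t) * w s)
    (F' := fun (t s : ℝ) => Complex.exp (Complex.I * s * t) * (Complex.I * s * w s)) (bound := fun _ => (1:ℝ))
    (s := Set.univ) Filter.univ_mem ?_ ?_ ?_ ?_ ?_ ?_).2
  · exact Filter.Eventually.of_forall fun t => (hm t).aestronglyMeasurable
  · refine bdd_intInt (hm t) 1 fun s hs => ?_
    rw [norm_mul, norm_e, one_mul]; exact hb s hs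
  · exact (hm' t).aestronglyMeasurable
  · filter_upwards [ae_Ioo] with s hs h t _
    have hs' := hs h
    rw [norm_mul, norm_e, one_mul, norm_mul, norm_mul, Complex.norm_I, one_mul, Complex.norm_real]
    have h1 : ‖s‖ ≤ 1 := abs_le.2 ⟨hs'.1.le, hs'.2.le⟩
    exact mul_le_one₀ h1 (norm_nonneg _) (hb s hs')
  · simp
  · refine Filter.Eventually.of_forall fun s _ t _ => ?_
    have h1 : HasDerivAt (fun t : ℝ => Complex.I * s * (t:ℂ)) (Complex.I * s * 1) t :=
      (Complex.ofRealCLM.hasDerivAt (x := t)).const_mul _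
    have := (h1.cexp).mul_const (w s)
    refine this.congr_deriv ?_
    ring

lemma meas_w (μ : ℂ) : Measurable (fun s : ℝ => ((1 - s ^ 2 : ℝ) : ℂ) ^ μ) := by
  fun_prop

lemma II_deriv1 {μ : ℂ} (hμ : 0 ≤ μ.re) (t : ℝ) :
    HasDerivAt (II μ) (∫ s in (-1 : ℝ)..1, Complex.exp (Complex.I * s * t) *
      (Complex.I * s * ((1 - s ^ 2 : ℝ) : ℂ) ^ μ)) t :=
  hasDerivAt_osc (meas_w μ) (fun s hs => w_norm_le hμ hs) t

lemma w_succ {μ : ℂ} {s : ℝ} (hs : s ∈ Set.Ioo (-1:ℝ) 1) :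
    ((1 - s ^ 2 : ℝ) : ℂ) ^ (μ + 1) = ((1 - s ^ 2 : ℝ) : ℂ) ^ μ * ((1 - s ^ 2 : ℝ) : ℂ) := by
  have h1 : 0 < 1 - s ^ 2 := by nlinarith [hs.1, hs.2]
  rw [Complex.cpow_add _ _ (by exact_mod_cast h1.ne'), Complex.cpow_one]

lemma int_e (μ : ℂ) (hμ : 0 ≤ μ.re) (t : ℝ) : IntervalIntegrable
    (fun s : ℝ => Complex.exp (Complex.I * s * t) * ((1 - s ^ 2 : ℝ) : ℂ) ^ μ) volume (-1) 1 := by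
  refine bdd_intInt (Measurable.mul (by fun_prop) (meas_w μ)) 1 fun s hs => ?_
  rw [norm_mul, norm_e, one_mul]; exact w_norm_le hμ hs

lemma int_e1 (μ : ℂ) (hμ : 0 ≤ μ.re) (t : ℝ) : IntervalIntegrable
    (fun s : ℝ => Complex.exp (Complex.I * s * t) * (Complex.I * s * ((1 - s ^ 2 : ℝ) : ℂ) ^ μ))
      volume (-1) 1 := by
  refine bdd_intInt (Measurable.mul (by fun_prop) (Measurable.mul (by fun_prop) (meas_w μ))) 1 fun s hs => ?_
  rw [norm_mul, norm_e, one_mul, norm_mul, norm_mul, Complex.norm_I, one_mul, Complex.norm_real]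
  exact mul_le_one₀ (abs_le.2 ⟨hs.1.le, hs.2.le⟩) (norm_nonneg _) (w_norm_le hμ hs)

lemma II_parts {μ : ℂ} (hμ : 0 ≤ μ.re) (t : ℝ) :
    (∫ s in (-1 : ℝ)..1, Complex.exp (Complex.I * s * t) *
      (Complex.I * s * ((1 - s ^ 2 : ℝ) : ℂ) ^ μ)) = -(t / (2 * (μ + 1))) * II (μ + 1) t := by
  have hre : 0 < (μ + 1).re := by simp; linarith
  have hne : μ + 1 ≠ 0 := fun h => by rw [h] at hre; simp at hre
  have hftc := intervalIntegral.integral_eq_sub_of_hasDerivAt_of_le (a := -1) (b := 1)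
    (f := fun s : ℝ => Complex.exp (Complex.I * s * t) * ((1 - s ^ 2 : ℝ) : ℂ) ^ (μ + 1))
    (f' := fun s : ℝ => (Complex.I * t) * (Complex.exp (Complex.I * s * t) * ((1 - s ^ 2 : ℝ) : ℂ) ^ (μ + 1))
      + (2 * (μ + 1) * Complex.I) * (Complex.exp (Complex.I * s * t) *
      (Complex.I * s * ((1 - s ^ 2 : ℝ) : ℂ) ^ μ))) (by norm_num) ?_ ?_ ?_
  · rw [intervalIntegral.integral_add ((int_e _ hre.le t).const_mul _) ((int_e1 _ hμ t).const_mul _),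
      intervalIntegral.integral_const_mul, intervalIntegral.integral_const_mul] at hftc
    simp only [one_pow, sub_self, Complex.ofReal_zero, neg_sq, Complex.zero_cpow hne, mul_zero] at hftc
    change Complex.I * t * II (μ + 1) t + _ = 0 at hftc
    have hI := Complex.I_sq
    generalize (∫ s in (-1 : ℝ)..1, Complex.exp (Complex.I * s * t) *
      (Complex.I * s * ((1 - s ^ 2 : ℝ) : ℂ) ^ μ)) = X at hftc ⊢
    field_simp
    linear_combination (-Complex.I) * hftc + (t * II (μ+1) t + 2 * (μ+1) * X) * hI
  · apply Continuous.continuousOn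
    refine Continuous.mul (by fun_prop) ?_
    refine continuous_iff_continuousAt.2 fun s => ?_
    exact ContinuousAt.comp (g := fun x : ℝ => (x:ℂ) ^ (μ+1)) (f := fun s : ℝ => 1 - s^2)
      (Complex.continuousAt_ofReal_cpow_const _ _ (Or.inl hre)) (by fun_prop)
  · intro s hs
    have h1 : 0 < 1 - s ^ 2 := by nlinarith [hs.1, hs.2]
    have hd1 : HasDerivAt (fun s : ℝ => Complex.I * (s:ℂ) * t) (Complex.I * 1 * t) s :=
      ((Complex.ofRealCLM.hasDerivAt (x := s)).const_mul _).mul_const _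
    have hd2 : HasDerivAt (fun s : ℝ => ((1 - s ^ 2 : ℝ) : ℂ)) ((-(2 * s) : ℝ) : ℂ) s := by
      apply HasDerivAt.ofReal_comp
      simpa using ((hasDerivAt_pow 2 s).const_sub 1)
    have hd3 := (hasDerivAt_id ((1 - s ^ 2 : ℝ) : ℂ)).cpow_const (c := μ + 1) (Or.inl (by rw [id, Complex.ofReal_re]; exact h1))
    have hd4 := HasDerivAt.comp_of_eq s hd3 hd2 rfl
    have := hd1.cexp.mul hd4
    refine this.congr_deriv ?_
    simp only [id, Function.comp, add_sub_cancel_right]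
    push_cast
    have hI := Complex.I_sq
    linear_combination (-2 * (μ+1) * Complex.exp (Complex.I * s * t) * s * (1 - (s:ℂ)^2)^μ) * hI
  · exact ((int_e _ hre.le t).const_mul _).add ((int_e1 _ hμ t).const_mul _)

lemma II_hasDeriv {μ : ℂ} (hμ : 0 ≤ μ.re) (t : ℝ) :
    HasDerivAt (II μ) (-(t / (2 * (μ + 1))) * II (μ + 1) t) t := by
  rw [← II_parts hμ]; exact II_deriv1 hμ t

lemma II_deriv2 {μ : ℂ} (hμ : 0 ≤ μ.re) (t : ℝ) :
    HasDerivAt (fun t : ℝ => -(t / (2 * (μ + 1))) * II (μ + 1) t) (II (μ + 1) t - II μ t) t := by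
  simp_rw [← II_parts hμ]
  have hre : 0 < (μ + 1).re := by simp; linarith
  have := hasDerivAt_osc (w := fun s : ℝ => Complex.I * s * ((1 - s ^ 2 : ℝ) : ℂ) ^ μ)
    (Measurable.mul (by fun_prop) (meas_w μ)) (fun s hs => by
      rw [norm_mul, norm_mul, Complex.norm_I, one_mul, Complex.norm_real]
      exact mul_le_one₀ (abs_le.2 ⟨hs.1.le, hs.2.le⟩) (norm_nonneg _) (w_norm_le hμ hs)) t
  convert this using 1
  rw [II, II, ← intervalIntegral.integral_sub (int_e _ hre.le t) (int_e _ hμ t)]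
  apply intervalIntegral.integral_congr_ae
  filter_upwards [ae_Ioo] with s hs h
  rw [w_succ (hs h)]
  push_cast
  have hI := Complex.I_sq
  linear_combination (-Complex.exp (Complex.I * s * t) * s^2 * (1 - (s:ℂ)^2)^μ) * hI

lemma II_bdd {μ : ℂ} (hμ : 0 ≤ μ.re) (t : ℝ) : ‖II μ t‖ ≤ 2 := by
  have := intervalIntegral.norm_integral_le_of_norm_le_const_ae (a := -1) (b := 1) (C := 1)
    (f := fun s : ℝ => Complex.exp (Complex.I * s * t) * ((1 - s ^ 2 : ℝ) : ℂ) ^ μ) (by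
      filter_upwards [ae_Ioo] with s hs h
      rw [norm_mul, norm_e, one_mul]; exact w_norm_le hμ (hs h))
  refine this.trans ?_
  norm_num

lemma II_decay {μ : ℂ} (hμ : 0 ≤ μ.re) :
    ∃ C : ℝ, 0 ≤ C ∧ ∀ t : ℝ, 1 ≤ t → ‖II μ t‖ ≤ C * t ^ (-(μ.re + 1)) := by
  have hre : 0 < (μ + 1).re := by simp; linarith
  have hne : μ + 1 ≠ 0 := fun h => by rw [h] at hre; simp at hre
  set c := μ + 1 with hc
  set a := II μ with ha
  set b : ℝ → ℂ := fun t : ℝ => -(t / (2 * c)) * II c t with hb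
  have hda : ∀ t, HasDerivAt a (b t) t := fun t => II_hasDeriv hμ t
  have hdb : ∀ t : ℝ, t ≠ 0 → HasDerivAt b (-(2 * c / t) * b t - a t) t := fun t ht => by
    refine (II_deriv2 hμ t).congr_deriv ?_
    have : (t:ℂ) ≠ 0 := by exact_mod_cast ht
    simp only [hb, ha]
    field_simp
    simp only [hc]
  set P : ℝ → ℂ := fun t => (t:ℂ) ^ c with hP
  have hdP : ∀ t : ℝ, 0 < t → HasDerivAt P (c / t * P t) t := fun t ht => by
    have ht' : (t:ℂ) ≠ 0 := by exact_mod_cast ht.ne'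
    have h3 := (hasDerivAt_id (t : ℂ)).cpow_const (c := c) (Or.inl (by simpa using ht))
    have h4 := h3.comp_ofReal
    refine h4.congr_deriv ?_
    simp only [id, hP]
    rw [Complex.cpow_sub _ _ ht', Complex.cpow_one]; field_simp
  have hdi : ∀ t : ℝ, 0 < t → HasDerivAt (fun t : ℝ => c / (t:ℂ)) (-c / t^2) t := fun t ht => by
    have ht' : (t:ℂ) ≠ 0 := by exact_mod_cast ht.ne'
    have h1 := ((hasDerivAt_inv ht').const_mul c).comp_ofReal
    refine (h1.congr_deriv ?_)
    field_simp
  set u : ℝ → ℂ := fun t => P t * a t with hu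
  set v : ℝ → ℂ := fun t => P t * b t + c / t * (P t * a t) with hv
  have hdu : ∀ t : ℝ, 0 < t → HasDerivAt u (v t) t := fun t ht => by
    refine ((hdP t ht).mul (hda t)).congr_deriv ?_
    simp only [hv]; ring
  set κ := c ^ 2 - c with hκ
  have hdv : ∀ t : ℝ, 0 < t → HasDerivAt v (-u t + κ / t ^ 2 * u t) t := fun t ht => by
    have ht' : (t:ℂ) ≠ 0 := by exact_mod_cast ht.ne'
    refine (((hdP t ht).mul (hdb t ht.ne')).add ((hdi t ht).mul ((hdP t ht).mul (hda t)))).congr_deriv ?_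
    simp only [hu, hκ, Pi.mul_apply]; field_simp; ring
  set K := ‖κ‖
  set E : ℝ → ℝ := fun t => ‖u t‖ ^ 2 + ‖v t‖ ^ 2 with hE
  set E' : ℝ → ℝ := fun t => 2 * inner ℝ (u t) (v t) + 2 * inner ℝ (v t) (-u t + κ / t ^ 2 * u t)
  have hdE : ∀ t : ℝ, 0 < t → HasDerivAt E (E' t) t := fun t ht =>
    ((hdu t ht).norm_sq).add ((hdv t ht).norm_sq)
  have hE' : ∀ t : ℝ, 0 < t → E' t ≤ K / t ^ 2 * E t := fun t ht => by
    simp only [E', inner_add_right, inner_neg_right, real_inner_comm (u t) (v t)]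
    have h1 : inner ℝ (v t) (κ / t ^ 2 * u t) ≤ ‖v t‖ * (K / t ^ 2 * ‖u t‖) := by
      refine (real_inner_le_norm _ _).trans (le_of_eq ?_)
      rw [norm_mul, norm_div, norm_pow, Complex.norm_real, Real.norm_eq_abs, abs_of_pos ht]
    have h2 : 0 ≤ K / t ^ 2 := by positivity
    have h3 := mul_nonneg h2 (sq_nonneg (‖u t‖ - ‖v t‖))
    simp only [hE]
    nlinarith
  set F : ℝ → ℝ := fun t => E t * Real.exp (K * t⁻¹) with hF
  have hdF : ∀ t : ℝ, 0 < t → HasDerivAt F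
      (E' t * Real.exp (K * t⁻¹) + E t * (Real.exp (K * t⁻¹) * (K * -(t^2)⁻¹))) t := fun t ht =>
    (hdE t ht).mul (((hasDerivAt_inv ht.ne').const_mul K).exp)
  have hanti : AntitoneOn F (Set.Ici 1) := by
    apply antitoneOn_of_deriv_nonpos (convex_Ici 1)
    · exact fun t ht => (hdF t (lt_of_lt_of_le one_pos ht)).continuousAt.continuousWithinAt
    · intro t ht
      rw [interior_Ici] at ht
      exact (hdF t (lt_trans one_pos ht)).differentiableAt.differentiableWithinAt
    · intro t ht
      rw [interior_Ici] at ht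
      have ht0 : 0 < t := lt_trans one_pos ht
      rw [(hdF t ht0).deriv]
      have := mul_le_mul_of_nonneg_right (hE' t ht0) (Real.exp_pos (K * t⁻¹)).le
      calc _ = E' t * Real.exp (K * t⁻¹) - K / t ^ 2 * E t * Real.exp (K * t⁻¹) := by ring
        _ ≤ 0 := by linarith
  refine ⟨Real.sqrt (F 1), Real.sqrt_nonneg _, fun t ht => ?_⟩
  have ht0 : 0 < t := lt_of_lt_of_le one_pos ht
  have h1 : F t ≤ F 1 := hanti (Set.mem_Ici.2 le_rfl) ht ht
  have h2 : ‖u t‖ ^ 2 ≤ F t := by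
    have : 1 ≤ Real.exp (K * t⁻¹) := Real.one_le_exp (by positivity)
    have h3 : ‖u t‖ ^ 2 ≤ E t := by simp only [hE]; nlinarith [sq_nonneg ‖v t‖]
    have h4 : 0 ≤ E t := by positivity
    simp only [hF]; nlinarith
  have h3 : ‖u t‖ ≤ Real.sqrt (F 1) := Real.le_sqrt_of_sq_le (h2.trans h1)
  have h4 : ‖u t‖ = t ^ (μ.re + 1) * ‖a t‖ := by
    simp only [hu, hP]; rw [norm_mul, Complex.norm_cpow_eq_rpow_re_of_pos ht0]; simp [hc]
  rw [h4] at h3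
  rw [Real.rpow_neg ht0.le, ← div_eq_mul_inv, le_div_iff₀ (by positivity)]
  linarith

inductive Good {l : ℕ} (μ : ℂ) : ℕ → (EuclideanSpace ℝ (Fin l) → ℂ) → Prop
  | base (j : ℕ) : Good μ j (fun x => II (μ + j) ‖x‖)
  | mul (d : ℕ) (i : Fin l) (g) : Good μ (d + 1) g → Good μ d (fun x => (x i : ℂ) * g x)
  | add (d : ℕ) (g h) : Good μ d g → Good μ d h → Good μ d (fun x => g x + h x)
  | smul (d : ℕ) (c : ℂ) (g) : Good μ d g → Good μ d (fun x => c * g x)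
  | weaken (d : ℕ) (g) : Good μ (d + 1) g → Good μ d g

lemma re_add_nat {μ : ℂ} (hμ : 0 ≤ μ.re) (j : ℕ) : 0 ≤ (μ + j).re := by
  simp; positivity

lemma norm_fderiv' {l : ℕ} (x : EuclideanSpace ℝ (Fin l)) (hx : x ≠ 0) :
    HasFDerivAt (fun x : EuclideanSpace ℝ (Fin l) => ‖x‖) (‖x‖⁻¹ • innerSL ℝ x) x := by
  have hn : ‖x‖ ≠ 0 := norm_ne_zero_iff.2 hx
  have h := (hasStrictFDerivAt_norm_sq x).hasFDerivAt.sqrt (by positivity)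
  simp only [Real.sqrt_sq (norm_nonneg _)] at h
  refine h.congr_fderiv ?_
  ext y
  simp
  field_simp

lemma Good.deriv {l : ℕ} {μ : ℂ} (hμ : 0 ≤ μ.re) {d : ℕ} {g : EuclideanSpace ℝ (Fin l) → ℂ}
    (hg : Good μ d g) : (∀ x, x ≠ 0 → DifferentiableAt ℝ g x) ∧
      ∀ i, ∃ g', Good μ d g' ∧ ∀ x, x ≠ 0 → fderiv ℝ g x (EuclideanSpace.single i 1) = g' x := by
  induction hg with
  | base j =>
    have key : ∀ x : EuclideanSpace ℝ (Fin l), x ≠ 0 → HasFDerivAt (fun x => II (μ + j) ‖x‖) _ x :=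
      fun x hx => ((II_hasDeriv (re_add_nat hμ j) ‖x‖).hasFDerivAt).comp x (norm_fderiv' x hx)
    refine ⟨fun x hx => (key x hx).differentiableAt, fun i => ?_⟩
    refine ⟨_, (Good.mul j i _ (Good.smul (j+1) (-(1 / (2 * (μ + j + 1)))) _ (Good.base (j+1)))), ?_⟩
    intro x hx
    rw [(key x hx).fderiv]
    have hn : (‖x‖:ℂ) ≠ 0 := by exact_mod_cast norm_ne_zero_iff.2 hx
    have hre : 0 < (μ + j + 1).re := by have := re_add_nat hμ j; simp at this ⊢; linarith
    have hne : μ + j + 1 ≠ 0 := fun h => by rw [h] at hre; simp at hre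
    simp [EuclideanSpace.inner_single_right]
    rw [← add_assoc]
    field_simp
  | mul d k g hg ih =>
    obtain ⟨h1, h2⟩ := ih
    have hk : ∀ x : EuclideanSpace ℝ (Fin l),
        HasFDerivAt (fun x : EuclideanSpace ℝ (Fin l) => (x k : ℂ))
          (Complex.ofRealCLM.comp (EuclideanSpace.proj k)) x := fun x =>
      (Complex.ofRealCLM.comp (EuclideanSpace.proj (𝕜 := ℝ) k)).hasFDerivAt
    refine ⟨fun x hx => (hk x).differentiableAt.mul (h1 x hx), fun i => ?_⟩
    obtain ⟨g', hg', h3⟩ := h2 i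
    refine ⟨_, Good.add d _ _ (Good.mul d k _ hg') (Good.smul d (if k = i then 1 else 0) _ (Good.weaken d _ hg)), ?_⟩
    intro x hx
    have := ((hk x).mul (h1 x hx).hasFDerivAt).fderiv
    change fderiv ℝ (fun x => (x k : ℂ) * g x) x = _ at this
    rw [this]
    simp [h3 x hx]
    split_ifs <;> simp
  | add d g h hg hh ih1 ih2 =>
    refine ⟨fun x hx => (ih1.1 x hx).add (ih2.1 x hx), fun i => ?_⟩
    obtain ⟨g', hg', h3⟩ := ih1.2 i
    obtain ⟨h', hh', h4⟩ := ih2.2 i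
    refine ⟨_, Good.add d _ _ hg' hh', fun x hx => ?_⟩
    rw [fderiv_fun_add (ih1.1 x hx) (ih2.1 x hx)]
    simp [h3 x hx, h4 x hx]
  | smul d c g hg ih =>
    refine ⟨fun x hx => (ih.1 x hx).const_mul c, fun i => ?_⟩
    obtain ⟨g', hg', h3⟩ := ih.2 i
    refine ⟨_, Good.smul d c _ hg', fun x hx => ?_⟩
    rw [fderiv_const_mul (ih.1 x hx)]
    simp [h3 x hx]
  | weaken d g hg ih =>
    refine ⟨ih.1, fun i => ?_⟩
    obtain ⟨g', hg', h3⟩ := ih.2 i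
    exact ⟨g', Good.weaken d _ hg', h3⟩

lemma Good.bound {l : ℕ} {μ : ℂ} (hμ : 0 ≤ μ.re) {d : ℕ} {g : EuclideanSpace ℝ (Fin l) → ℂ}
    (hg : Good μ d g) : ∃ C : ℝ, 0 ≤ C ∧ (∀ x, ‖x‖ ≤ 1 → ‖g x‖ ≤ C) ∧
      ∀ x, 1 ≤ ‖x‖ → ‖g x‖ ≤ C * ‖x‖ ^ (-(μ.re + 1 + d)) := by
  induction hg with
  | base j =>
    obtain ⟨C, hC, h⟩ := II_decay (re_add_nat hμ j)
    refine ⟨C + 2, by positivity, fun x _ => (II_bdd (re_add_nat hμ j) _).trans (by linarith),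
      fun x hx => (h _ hx).trans ?_⟩
    have : (μ + j).re + 1 = μ.re + 1 + j := by simp; ring
    rw [this]
    gcongr; linarith
  | mul d k g hg ih =>
    obtain ⟨C, hC, h1, h2⟩ := ih
    refine ⟨C, hC, fun x hx => ?_, fun x hx => ?_⟩
    · have hk : ‖x k‖ ≤ 1 := (PiLp.norm_apply_le x k).trans hx
      rw [norm_mul, Complex.norm_real]
      nlinarith [h1 x hx, norm_nonneg (g x), norm_nonneg (x k)]
    · have hk : ‖x k‖ ≤ ‖x‖ := PiLp.norm_apply_le x k
      have h0 : 0 < ‖x‖ := by linarith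
      rw [norm_mul, Complex.norm_real]
      calc ‖x k‖ * ‖g x‖ ≤ ‖x‖ * (C * ‖x‖ ^ (-(μ.re + 1 + ((d + 1 : ℕ) : ℝ)))) := by
            gcongr; exact h2 x hx
        _ = C * (‖x‖ ^ (1:ℝ) * ‖x‖ ^ (-(μ.re + 1 + ((d + 1 : ℕ) : ℝ)))) := by rw [Real.rpow_one]; ring
        _ = _ := by rw [← Real.rpow_add h0]; push_cast; ring_nf
  | add d g h hg hh ih1 ih2 =>
    obtain ⟨C, hC, h1, h2⟩ := ih1
    obtain ⟨D, hD, h3, h4⟩ := ih2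
    refine ⟨C + D, by positivity, fun x hx => ?_, fun x hx => ?_⟩
    · exact (norm_add_le _ _).trans (add_le_add (h1 x hx) (h3 x hx))
    · rw [add_mul]; exact (norm_add_le _ _).trans (add_le_add (h2 x hx) (h4 x hx))
  | smul d c g hg ih =>
    obtain ⟨C, hC, h1, h2⟩ := ih
    refine ⟨‖c‖ * C, by positivity, fun x hx => ?_, fun x hx => ?_⟩
    · rw [norm_mul]; gcongr; exact h1 x hx
    · rw [norm_mul, mul_assoc]; gcongr; exact h2 x hx
  | weaken d g hg ih =>
    obtain ⟨C, hC, h1, h2⟩ := ih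
    refine ⟨C, hC, h1, fun x hx => (h2 x hx).trans ?_⟩
    gcongr
    omega

lemma Good.mderiv {l : ℕ} {μ : ℂ} (hμ : 0 ≤ μ.re) {d : ℕ} {f : EuclideanSpace ℝ (Fin l) → ℂ}
    (hf : Good μ d f) (L : List (Fin l)) :
    ∃ g, Good μ d g ∧ ∀ x, x ≠ 0 → _root_.mderiv L f x = g x := by
  induction L with
  | nil => exact ⟨f, hf, fun x _ => rfl⟩
  | cons i L ih =>
    obtain ⟨g, hg, h⟩ := ih
    obtain ⟨g', hg', h'⟩ := (hg.deriv hμ).2 i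
    refine ⟨g', hg', fun x hx => ?_⟩
    rw [← h' x hx]
    simp only [_root_.mderiv]
    rw [Filter.EventuallyEq.fderiv_eq (f₁ := _root_.mderiv L f) (f := g)]
    filter_upwards [isOpen_ne.mem_nhds hx] with y hy using h y hy

lemma mderiv_scale {l : ℕ} (f : EuclideanSpace ℝ (Fin l) → ℂ) (r : ℝ) (L : List (Fin l)) :
    mderiv L (fun x => f (r • x)) = fun x => ((r ^ L.length : ℝ) : ℂ) * mderiv L f (r • x) := by
  induction L with
  | nil => simp [mderiv]
  | cons i L ih =>
    funext x
    simp only [mderiv, ih]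
    have : (fun x => ((r ^ L.length : ℝ) : ℂ) * mderiv L f (r • x)) =
      (((r ^ L.length : ℝ) : ℂ) • fun x => mderiv L f (r • x)) := rfl
    rw [this, fderiv_const_smul_field, Pi.smul_apply, fderiv_comp_smul]
    simp; ring

lemma partialD_bound {l : ℕ} (ν : ℂ) (hν : 1 / 2 ≤ ν.re) (α : Fin l → ℕ) :
    ∃ C : ℝ, 0 ≤ C ∧ ∀ r : ℝ, 0 < r → ∀ x : EuclideanSpace ℝ (Fin l), x ≠ 0 →
      ‖partialD α (fun H => Jmod ν (r * ‖H‖)) x‖ ≤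
        C * r ^ (∑ i, α i) * (r * ‖x‖) ^ (-(ν.re + 1 / 2)) := by
  set μ := ν - 1 / 2 with hμd
  have hμr : μ.re = ν.re - 1 / 2 := by simp [hμd]
  have hμ : 0 ≤ μ.re := by rw [hμr]; linarith
  set f : EuclideanSpace ℝ (Fin l) → ℂ := fun H => Jmod ν ‖H‖ with hf
  have hgood : Good μ 0 f := by
    have := Good.smul (l := l) 0 ((2 : ℂ) ^ ν * Complex.Gamma (ν + 1 / 2) * Complex.Gamma (1 / 2))⁻¹ _
      (Good.base (μ := μ) 0)
    simpa [hf, Jmod, II, hμd] using this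
  set L := (List.finRange l).flatMap fun i => List.replicate (α i) i with hL
  have hlen : L.length = ∑ i, α i := by
    simp [hL, List.length_flatMap, Fin.sum_univ_def]
  obtain ⟨g, hg, hgm⟩ := hgood.mderiv hμ L
  obtain ⟨C, hC, h1, h2⟩ := hg.bound hμ
  refine ⟨C, hC, fun r hr x hx => ?_⟩
  have hsc : (fun H : EuclideanSpace ℝ (Fin l) => Jmod ν (r * ‖H‖)) = fun H => f (r • H) := by
    funext H; simp [hf, norm_smul, abs_of_pos hr]
  rw [partialD, hsc, ← hL, mderiv_scale, hlen]
  have hrx : r • x ≠ 0 := smul_ne_zero hr.ne' hx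
  have hnr : ‖r • x‖ = r * ‖x‖ := by simp [norm_smul, abs_of_pos hr]
  have hpos : 0 < ‖r • x‖ := norm_pos_iff.2 hrx
  rw [norm_mul, Complex.norm_real, Real.norm_eq_abs, abs_of_pos (by positivity), hgm _ hrx, ← hnr,
    mul_comm C, mul_assoc]
  gcongr
  have he : -(ν.re + 1 / 2) = -(μ.re + 1 + (0:ℕ)) := by rw [hμr]; push_cast; ring
  rw [he]
  rcases le_total ‖r • x‖ 1 with h | h
  · refine (h1 _ h).trans (le_mul_of_one_le_right hC ?_)
    exact Real.one_le_rpow_of_pos_of_le_one_of_nonpos hpos h (by simp; linarith)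
  · exact h2 _ h

lemma tail_int (l : ℕ) (hl : 1 ≤ l) (q : ℝ) (hq : l < q) :
    ∃ D : ℝ, 0 ≤ D ∧ ∀ a : ℝ, 0 < a →
      IntegrableOn (fun H : EuclideanSpace ℝ (Fin l) => ‖H‖ ^ (-q)) {H | a < ‖H‖} ∧
      ∫ H in {H : EuclideanSpace ℝ (Fin l) | a < ‖H‖}, ‖H‖ ^ (-q) = D * a ^ (l - q) := by
  haveI : Nonempty (Fin l) := ⟨⟨0, hl⟩⟩
  have hfin : Module.finrank ℝ (EuclideanSpace ℝ (Fin l)) = l := by simp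
  refine ⟨l * (volume.real (Metric.ball (0:EuclideanSpace ℝ (Fin l)) 1) * (1 / (q - l))), ?_, fun a ha => ?_⟩
  · have : 0 < q - l := by linarith
    positivity
  have hms : MeasurableSet {H : EuclideanSpace ℝ (Fin l) | a < ‖H‖} :=
    measurableSet_lt measurable_const measurable_norm
  set φ : ℝ → ℝ := (Set.Ioi a).indicator (fun y => y ^ (-q)) with hφ
  have hind : ({H : EuclideanSpace ℝ (Fin l) | a < ‖H‖}.indicator fun H => ‖H‖ ^ (-q)) =
      fun H => φ ‖H‖ := by
    funext H
    simp [hφ, Set.indicator]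
  have hrad : (fun y : ℝ => y ^ (l - 1) • φ y) = (Set.Ioi a).indicator (fun y => y ^ ((l:ℝ) - 1 - q)) := by
    funext y
    simp only [hφ, Set.indicator]
    split_ifs with h
    · have hy : 0 < y := ha.trans h
      rw [smul_eq_mul, ← Real.rpow_natCast, ← Real.rpow_add hy, Nat.cast_sub hl]; simp; ring_nf
    · simp
  have hlt : (l:ℝ) - 1 - q < -1 := by linarith
  have hsub : Set.Ioi a ∩ Set.Ioi 0 = Set.Ioi a := by
    rw [Set.inter_eq_left]; exact Set.Ioi_subset_Ioi ha.le
  constructor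
  · rw [← integrable_indicator_iff hms, hind, integrable_fun_norm_addHaar, hfin, hrad, IntegrableOn,
      integrable_indicator_iff measurableSet_Ioi, IntegrableOn, Measure.restrict_restrict measurableSet_Ioi, hsub]
    exact integrableOn_Ioi_rpow_of_lt hlt ha
  · rw [← integral_indicator hms, hind, integral_fun_norm_addHaar, hfin, hrad,
      integral_indicator measurableSet_Ioi, Measure.restrict_restrict measurableSet_Ioi, hsub,
      integral_Ioi_rpow_of_lt hlt ha]
    have e : (l:ℝ) - 1 - q + 1 = l - q := by ring
    rw [e]
    have : q - l ≠ 0 := by linarith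
    have : (l:ℝ) - q ≠ 0 := by linarith
    simp only [nsmul_eq_mul, smul_eq_mul]
    have e2 : (l:ℝ) - q = -(q - l) := by ring
    rw [div_eq_mul_inv, show ((l:ℝ) - q)⁻¹ = -(1 / (q - l)) by rw [e2, inv_neg, one_div]]
    ring
/-- L² tail estimate for sums of multi-index derivatives of
H ↦ 𝒥_{z+l/2}(√(R−ρ₀²)‖H‖), over multi-indices of order at most 2k (each such
multi-index has all entries ≤ 2k, so they are enumerated by functions Fin l → Fin (2k+1)). -/
theorem Jmod_multiindex_L2_tail (l k : ℕ) (hl : 1 ≤ l) (ρ₀ : ℝ) (hρ : 0 ≤ ρ₀)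
    (z : ℂ) (hz : 0 ≤ z.re) :
    ∃ c : ℝ, 0 < c ∧ ∀ R : ℝ, ρ₀ ^ 2 < R → ∀ a : ℝ, 0 < a →
      Real.sqrt (∫ H in {H : EuclideanSpace ℝ (Fin l) | a < ‖H‖},
          (∑ α ∈ Finset.univ.filter
              (fun α : Fin l → Fin (2 * k + 1) => (∑ i, (α i : ℕ)) ≤ 2 * k),
            ‖partialD (fun i => (α i : ℕ))
                (fun H' => Jmod (z + l / 2) (Real.sqrt (R - ρ₀ ^ 2) * ‖H'‖)) H‖) ^ 2) ≤
        c * (∑ m ∈ Finset.range (2 * k + 1), (R - ρ₀ ^ 2) ^ ((m : ℝ) / 2)) *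
          (R - ρ₀ ^ 2) ^ (-(z.re / 2 + ((l : ℝ) + 1) / 4)) *
          a ^ (-z.re - 1 / 2) := by
  classical
  set ν : ℂ := z + l / 2 with hν
  have hνre : ν.re = z.re + l / 2 := by simp [hν]
  have hl1 : (1:ℝ) ≤ l := by exact_mod_cast hl
  have hνr : 1 / 2 ≤ ν.re := by rw [hνre]; linarith
  set A := Finset.univ.filter
              (fun α : Fin l → Fin (2 * k + 1) => (∑ i, (α i : ℕ)) ≤ 2 * k) with hA
  choose C hC hCb using fun α : Fin l → Fin (2 * k + 1) =>
    partialD_bound (l := l) ν hνr (fun i => (α i : ℕ))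
  set p := ν.re + 1 / 2 with hp
  obtain ⟨D, hD, hDi⟩ := tail_int l hl (2 * p) (by rw [hp, hνre]; linarith)
  set B := ∑ α ∈ A, C α with hB
  have hB0 : 0 ≤ B := Finset.sum_nonneg fun α _ => hC α
  refine ⟨B * Real.sqrt D + 1, by positivity, fun R hR a ha => ?_⟩
  have hT : 0 < R - ρ₀ ^ 2 := by linarith
  set T := R - ρ₀ ^ 2 with hTd
  set r := Real.sqrt T with hr
  have hr0 : 0 < r := Real.sqrt_pos.2 hT
  set S := ∑ m ∈ Finset.range (2 * k + 1), T ^ ((m : ℝ) / 2) with hS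
  have hS0 : 0 ≤ S := Finset.sum_nonneg fun m _ => by positivity
  have hrS : ∀ m, m ≤ 2 * k → r ^ m ≤ S := fun m hm => by
    have e : r ^ m = T ^ ((m : ℝ) / 2) := by
      rw [hr, Real.sqrt_eq_rpow, ← Real.rpow_natCast, ← Real.rpow_mul hT.le]; ring_nf
    rw [e]
    exact Finset.single_le_sum (f := fun m : ℕ => T ^ ((m : ℝ) / 2)) (fun m _ => by positivity)
      (Finset.mem_range.2 (by omega))
  obtain ⟨hint, hval⟩ := hDi a ha
  have hms : MeasurableSet {H : EuclideanSpace ℝ (Fin l) | a < ‖H‖} :=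
    measurableSet_lt measurable_const measurable_norm
  have hmono : (∫ H in {H : EuclideanSpace ℝ (Fin l) | a < ‖H‖},
          (∑ α ∈ A, ‖partialD (fun i => (α i : ℕ)) (fun H' => Jmod ν (r * ‖H'‖)) H‖) ^ 2) ≤
      ∫ H in {H : EuclideanSpace ℝ (Fin l) | a < ‖H‖},
        (B * S * r ^ (-p)) ^ 2 * ‖H‖ ^ (-(2 * p)) := by
    apply integral_mono_of_nonneg
    · exact Filter.Eventually.of_forall fun H => sq_nonneg _
    · exact hint.const_mul _
    · refine (ae_restrict_iff' hms).2 (Filter.Eventually.of_forall fun H hH => ?_)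
      have hH0 : 0 < ‖H‖ := ha.trans hH
      have hHne : H ≠ 0 := norm_pos_iff.1 hH0
      have e : (B * S * r ^ (-p)) ^ 2 * ‖H‖ ^ (-(2 * p)) = (B * S * (r * ‖H‖) ^ (-p)) ^ 2 := by
        rw [Real.mul_rpow hr0.le hH0.le, show -(2 * p) = -p + -p by ring, Real.rpow_add hH0]; ring
      simp only [e]
      refine pow_le_pow_left₀ (Finset.sum_nonneg fun α _ => norm_nonneg _) ?_ 2
      rw [hB, Finset.sum_mul, Finset.sum_mul]
      refine Finset.sum_le_sum fun α hα => (hCb α r hr0 H hHne).trans ?_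
      have := hrS _ (Finset.mem_filter.1 hα).2
      have := hC α
      gcongr
  rw [integral_const_mul, hval] at hmono
  have e1 : r ^ (-p) = T ^ (-(z.re / 2 + ((l : ℝ) + 1) / 4)) := by
    rw [hr, Real.sqrt_eq_rpow, ← Real.rpow_mul hT.le, hp, hνre]; ring_nf
  have e2 : a ^ ((l:ℝ) - 2 * p) = (a ^ (-z.re - 1 / 2)) ^ 2 := by
    rw [← Real.rpow_natCast, ← Real.rpow_mul ha.le, hp, hνre]; congr 1; push_cast; ring
  refine (Real.sqrt_le_sqrt hmono).trans ?_
  rw [e2, ← e1]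
  have e3 : (B * S * r ^ (-p)) ^ 2 * (D * (a ^ (-z.re - 1 / 2)) ^ 2) =
      (B * Real.sqrt D * S * r ^ (-p) * a ^ (-z.re - 1 / 2)) ^ 2 := by
    have := Real.sq_sqrt hD
    linear_combination (-(B * S * r ^ (-p) * a ^ (-z.re - 1 / 2)) ^ 2) * this
  rw [e3, Real.sqrt_sq (by positivity)]
  gcongr
  linarith
end
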